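/- arXiv:1412.3959 — 3 statements merged into one kernel-verified Lean document; each statement's English description precedes it below -/
import Mathlib

section
/- Let N ≥ 1, let R > 400 be an integer, U^N = {x ∈ ℤ^d : |x| < NR}, and let f : U^N → (0,∞) be such that π = f² is a probability measure on U^N satisfying: (a) π(x) ≥ c₀·π(y) whenever x, y ∈ U^N with |x| ≤ |y|; and (b) c₁·N^{−d−4} ≤ π(x) ≤ c₂·N^{−d} for all x ∈ U^N. Then there exists a constant c > 0, depending only on d, R, c₀, c₁, c₂, such that the Poincaré inequality Var_π(g) ≤ c·N²·Ē(g,g) holds for every g : U^N → ℝ, where Ē(g,g) = ½ Σ_{x,y∈U^N,|x−y|=1} (f(x)f(y)/(2d))(g(x)−g(y))². Equivalently, the spectral gap λ̄ of −L̃ (the second smallest eigenvalue of minus the generator (L̃g)(x) = (1/(2d)) Σ_{y∈U^N,|y−x|=1} (f(y)/f(x))(g(y)−g(x)), which is self-adjoint in ℓ²(π)) satisfies λ̄ ≥ c^{−1}·N^{−2}. -/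
open scoped BigOperators Classical
open Metric Set

noncomputable section

def toR (d : ℕ) (x : Fin d → ℤ) : EuclideanSpace ℝ (Fin d) :=
  (WithLp.equiv 2 (Fin d → ℝ)).symm (fun i => (x i : ℝ))

def latAdj (d : ℕ) (x y : Fin d → ℤ) : Prop := ‖toR d x - toR d y‖ = 1

def wRad (d : ℕ) (a R : ℝ) (z : EuclideanSpace ℝ (Fin d)) : ℝ :=
  if ‖z‖ ≤ a then 1
  else if ‖z‖ ≤ R then (‖z‖ ^ ((2:ℝ) - d) - R ^ ((2:ℝ) - d)) / (a ^ ((2:ℝ) - d) - R ^ ((2:ℝ) - d))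
  else 0

def lap (d : ℕ) (h : EuclideanSpace ℝ (Fin d) → ℝ) (z : EuclideanSpace ℝ (Fin d)) : ℝ :=
  ∑ i : Fin d, fderiv ℝ (fun y => fderiv ℝ h y (EuclideanSpace.single i (1:ℝ))) z
    (EuclideanSpace.single i (1:ℝ))

def hNf (d N : ℕ) (h : EuclideanSpace ℝ (Fin d) → ℝ) (x : Fin d → ℤ) : ℝ :=
  h ((N:ℝ)⁻¹ • toR d x)

def hNsq (d N : ℕ) (h : EuclideanSpace ℝ (Fin d) → ℝ) : ℝ :=
  ∑' x : Fin d → ℤ, (hNf d N h x)^2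

def fConf (d N : ℕ) (h : EuclideanSpace ℝ (Fin d) → ℝ) (x : Fin d → ℤ) : ℝ :=
  hNf d N h x / Real.sqrt (hNsq d N h)

def piConf (d N : ℕ) (h : EuclideanSpace ℝ (Fin d) → ℝ) (x : Fin d → ℤ) : ℝ :=
  (fConf d N h x)^2

def UNf (d N R : ℕ) : Finset (Fin d → ℤ) :=
  (Finset.Icc (fun _ => -((N*R : ℕ) : ℤ)) (fun _ => ((N*R : ℕ) : ℤ))).filter
    (fun x => ‖toR d x‖ < (N:ℝ) * R)

def genOp (d : ℕ) (U : Finset (Fin d → ℤ)) (f g : (Fin d → ℤ) → ℝ) (x : Fin d → ℤ) : ℝ :=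
  (1/(2*(d:ℝ))) * ∑ y ∈ U.filter (fun y => latAdj d y x), (f y / f x) * (g y - g x)

def dirForm (d : ℕ) (U : Finset (Fin d → ℤ)) (f g : (Fin d → ℤ) → ℝ) : ℝ :=
  (1/2) * ∑ x ∈ U, ∑ y ∈ U.filter (fun y => latAdj d x y),
    (f x * f y / (2*(d:ℝ))) * (g x - g y)^2

def boxF (d : ℕ) (x₀ : Fin d → ℤ) (r : ℕ) : Finset (Fin d → ℤ) :=
  Finset.Icc (fun i => x₀ i - (r:ℤ)) (fun i => x₀ i + (r:ℤ))

def Abx (d : ℕ) (x₀ : Fin d → ℤ) (N : ℕ) (r : ℝ) : Finset (Fin d → ℤ) :=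
  boxF d x₀ ⌊(N:ℝ) ^ r⌋₊

def A6b (d : ℕ) (x₀ : Fin d → ℤ) (N : ℕ) (δ : ℝ) : Finset (Fin d → ℤ) :=
  boxF d x₀ ⌊δ * N / 100⌋₊

def KNl (d N : ℕ) (S : Set (EuclideanSpace ℝ (Fin d))) : Set (Fin d → ℤ) :=
  {x | ∃ y ∈ S, ∀ i, |(x i : ℝ) - N * y i| ≤ 1}

def GammaN (d N : ℕ) (δ : ℝ) (K : Set (EuclideanSpace ℝ (Fin d))) : Set (Fin d → ℤ) :=
  {x | x ∉ KNl d N (cthickening (δ/2) K) ∧ ∃ y ∈ KNl d N (cthickening (δ/2) K), latAdj d x y}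

def capZ (d : ℕ) (A : Finset (Fin d → ℤ)) : ℝ :=
  sInf { E : ℝ | ∃ φ : (Fin d → ℤ) → ℝ, (Function.support φ).Finite ∧
    (∀ x ∈ A, 1 ≤ φ x) ∧
    E = (1/2) * ∑' p : (Fin d → ℤ) × (Fin d → ℤ),
      (if latAdj d p.1 p.2 then (1/(2*(d:ℝ))) * (φ p.2 - φ p.1)^2 else 0) }

def genEntry (d : ℕ) (U : Finset (Fin d → ℤ)) (f : (Fin d → ℤ) → ℝ) (x y : Fin d → ℤ) : ℝ :=
  (if latAdj d y x then (1/(2*(d:ℝ))) * (f y / f x) else 0)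
  - (if x = y then (1/(2*(d:ℝ))) * ∑ z ∈ U.filter (fun z => latAdj d z x), f z / f x else 0)

def killedMat (d : ℕ) (U D : Finset (Fin d → ℤ)) (f : (Fin d → ℤ) → ℝ) :
    Matrix {x // x ∈ D} {x // x ∈ D} ℝ :=
  fun x y => genEntry d U f x.1 y.1

def genD (d : ℕ) (U D : Finset (Fin d → ℤ)) (f g : (Fin d → ℤ) → ℝ) (x : Fin d → ℤ) : ℝ :=
  (1/(2*(d:ℝ))) * ((∑ y ∈ D.filter (fun y => latAdj d y x), (f y / f x) * g y)
    - (∑ z ∈ U.filter (fun z => latAdj d z x), (f z / f x)) * g x)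

def nbrs (d : ℕ) (w : Fin d → ℤ) : Finset (Fin d → ℤ) :=
  (Finset.Icc (fun i => w i - 1) (fun i => w i + 1)).filter (fun z => latAdj d z w)

def outBd (d : ℕ) (A : Finset (Fin d → ℤ)) : Finset (Fin d → ℤ) :=
  (A.biUnion (nbrs d)).filter (fun z => z ∉ A)

def discLap (d : ℕ) (g : (Fin d → ℤ) → ℝ) (x : Fin d → ℤ) : ℝ :=
  (1/(2*(d:ℝ))) * ∑ i : Fin d,
    ((g (x + Pi.single i 1) - g x) + (g (x - Pi.single i 1) - g x))

def discEnergy (d : ℕ) (φ : (Fin d → ℤ) → ℝ) : ℝ :=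
  (1/2) * ∑' p : (Fin d → ℤ) × (Fin d → ℤ),
    (if latAdj d p.1 p.2 then (1/(2*(d:ℝ))) * (φ p.2 - φ p.1)^2 else 0)

def dirEnergy (d : ℕ) (u : EuclideanSpace ℝ (Fin d) → ℝ) : ℝ :=
  (1/2) * ∫ z, ‖gradient u z‖^2

def relCap (d : ℕ) (R : ℝ) (A : Set (EuclideanSpace ℝ (Fin d))) : ℝ :=
  sInf { E : ℝ | ∃ u : EuclideanSpace ℝ (Fin d) → ℝ,
    (∃ C : NNReal, LipschitzWith C u) ∧ HasCompactSupport u ∧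
    tsupport u ⊆ ball (0 : EuclideanSpace ℝ (Fin d)) R ∧
    (∀ z ∈ A, 1 ≤ u z) ∧ E = dirEnergy d u }

/-!
Poincaré inequality by canonical paths from an arbitrary `x ∈ U^N` to the points `b` of a small
central cube `[-m, m]^d`, where `m = N / K` for a large constant `K`. The path replaces the
coordinates of `x` by those of `b` one at a time, starting with a coordinate `j` for which `|x j|`
is maximal.

If `|b|² ≤ (x j)²`, the loss of `x j` pays for all that the coordinates of `b` add, so the path
stays in the ball of radius `|x|`, where almost monotonicity gives `π v ≥ c₀ π x`. Otherwise the
whole path stays in the ball of radius `2 d m`. The upper bound on `π` leaves this ball at most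
half of the total mass, so comparing `π v` with the average of `π` over the points farther out
gives `π v ≳ N^(-d) ≳ π x`. Either way every vertex `v` of the path satisfies `π v ≥ κ π x`, hence
every edge on it has weight at least `κ π x`.

By Cauchy-Schwarz along the path, it remains to count how often an edge is used. With
`Q = [-NR, NR]^d`, the involutions `(x, b) ↦ (S.piecewise b x, S.piecewise x b)` of `Q × Q`, for
the set `S` of replaced coordinates, and `(w, u) ↦ (update w i u, w i)` of `Q × [-NR, NR]` show
that each edge is charged at most a constant times `|Q| (2 N R + 1)` times. Paths have length of
order `N`, and `|Q|` is at most a constant times the number of endpoints `b`, so the constant in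
the inequality is of order `N²`.
-/

section PathCounting

variable {ι : Type*} [Fintype ι] [DecidableEq ι]

lemma sum_sum_piecewise {α : ι → Type*} {A : Type*} [AddCommMonoid A] (s : ∀ i, Finset (α i))
    (S : Finset ι) (F : (∀ i, α i) → A) :
    ∑ x ∈ Fintype.piFinset s, ∑ y ∈ Fintype.piFinset s, F (S.piecewise y x)
      = (Fintype.piFinset s).card • ∑ w ∈ Fintype.piFinset s, F w := by
  set Q := Fintype.piFinset s
  have exchange_mem : ∀ p ∈ Q ×ˢ Q, (S.piecewise p.2 p.1, S.piecewise p.1 p.2) ∈ Q ×ˢ Q := by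
    rintro ⟨x, y⟩ hp
    obtain ⟨hx, hy⟩ := Finset.mem_product.1 hp
    simp only [Q, Fintype.mem_piFinset] at hx hy
    refine Finset.mem_product.2
      ⟨Fintype.mem_piFinset.2 fun i => ?_, Fintype.mem_piFinset.2 fun i => ?_⟩
    · exact S.piecewise_cases y x (· ∈ s i) (hy i) (hx i)
    · exact S.piecewise_cases x y (· ∈ s i) (hx i) (hy i)
  have exchange_exchange : ∀ p : (∀ i, α i) × (∀ i, α i),
      (S.piecewise (S.piecewise p.1 p.2) (S.piecewise p.2 p.1),
        S.piecewise (S.piecewise p.2 p.1) (S.piecewise p.1 p.2)) = p := by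
    rintro ⟨x, y⟩
    ext i <;> by_cases hi : i ∈ S <;> simp [hi]
  calc ∑ x ∈ Q, ∑ y ∈ Q, F (S.piecewise y x)
      = ∑ p ∈ Q ×ˢ Q, F (S.piecewise p.2 p.1) :=
        (Finset.sum_product' Q Q fun x y => F (S.piecewise y x)).symm
    _ = ∑ p ∈ Q ×ˢ Q, F p.1 :=
        Finset.sum_nbij' (fun p => (S.piecewise p.2 p.1, S.piecewise p.1 p.2))
          (fun p => (S.piecewise p.2 p.1, S.piecewise p.1 p.2)) exchange_mem exchange_mem
          (fun p _ => exchange_exchange p) (fun p _ => exchange_exchange p) (fun _ _ => rfl)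
    _ = Q.card • ∑ w ∈ Q, F w := by
        simp only [Finset.sum_product_right, Finset.sum_const]

lemma sum_sum_update {α : ι → Type*} {A : Type*} [AddCommMonoid A] (s : ∀ i, Finset (α i))
    (i : ι) (F : (∀ i, α i) → A) :
    ∑ w ∈ Fintype.piFinset s, ∑ u ∈ s i, F (Function.update w i u)
      = (s i).card • ∑ w ∈ Fintype.piFinset s, F w := by
  set Q := Fintype.piFinset s
  have exchange_mem : ∀ p ∈ Q ×ˢ s i, (Function.update p.1 i p.2, p.1 i) ∈ Q ×ˢ s i := by
    rintro ⟨w, u⟩ hp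
    obtain ⟨hw, hu⟩ := Finset.mem_product.1 hp
    refine Finset.mem_product.2
      ⟨Fintype.mem_piFinset.2 fun l => ?_, Fintype.mem_piFinset.1 hw i⟩
    rcases eq_or_ne l i with rfl | hl
    · simpa using hu
    · simpa [hl] using Fintype.mem_piFinset.1 hw l
  calc ∑ w ∈ Q, ∑ u ∈ s i, F (Function.update w i u)
      = ∑ p ∈ Q ×ˢ s i, F (Function.update p.1 i p.2) :=
        (Finset.sum_product' Q (s i) fun w u => F (Function.update w i u)).symm
    _ = ∑ p ∈ Q ×ˢ s i, F p.1 :=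
        Finset.sum_nbij' (fun p => (Function.update p.1 i p.2, p.1 i))
          (fun p => (Function.update p.1 i p.2, p.1 i)) exchange_mem exchange_mem
          (fun p _ => by simp) (fun p _ => by simp) (fun _ _ => rfl)
    _ = (s i).card • ∑ w ∈ Q, F w := by
        simp only [Finset.sum_product_right, Finset.sum_const]

lemma sum_sum_sum_update_piecewise_le {α : ι → Type*} (s : ∀ i, Finset (α i)) (S : Finset ι)
    (i : ι) {F : (∀ i, α i) → ℝ} (hF : ∀ w, 0 ≤ F w) {A B : Finset (∀ i, α i)}
    (hA : A ⊆ Fintype.piFinset s) (hB : B ⊆ Fintype.piFinset s) :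
    ∑ x ∈ A, ∑ b ∈ B, ∑ u ∈ s i, F (Function.update (S.piecewise b x) i u)
      ≤ (Fintype.piFinset s).card * ((s i).card * ∑ w ∈ Fintype.piFinset s, F w) := by
  have hline : ∀ w, 0 ≤ ∑ u ∈ s i, F (Function.update w i u) :=
    fun _ => Finset.sum_nonneg fun _ _ => hF _
  calc ∑ x ∈ A, ∑ b ∈ B, ∑ u ∈ s i, F (Function.update (S.piecewise b x) i u)
      ≤ ∑ x ∈ Fintype.piFinset s, ∑ b ∈ Fintype.piFinset s,
          ∑ u ∈ s i, F (Function.update (S.piecewise b x) i u) :=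
        (Finset.sum_le_sum_of_subset_of_nonneg hA fun _ _ _ =>
            Finset.sum_nonneg fun _ _ => hline _).trans
          (Finset.sum_le_sum fun _ _ =>
            Finset.sum_le_sum_of_subset_of_nonneg hB fun _ _ _ => hline _)
    _ = (Fintype.piFinset s).card * ((s i).card * ∑ w ∈ Fintype.piFinset s, F w) := by
        rw [sum_sum_piecewise s S fun w => ∑ u ∈ s i, F (Function.update w i u),
          sum_sum_update, nsmul_eq_mul, nsmul_eq_mul]

end PathCounting

section Telescoping

lemma sq_sub_le_mul_sum_sq_sub_succ (h : ℕ → ℝ) (n : ℕ) :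
    (h 0 - h n) ^ 2 ≤ n * ∑ k ∈ Finset.range n, (h k - h (k + 1)) ^ 2 := by
  rw [← Finset.sum_range_sub']
  simpa using sq_sum_le_card_mul_sum_sq (s := Finset.range n) (f := fun k => h k - h (k + 1))

lemma mul_sq_sub_le_two_mul_sum_Icc {h e : ℤ → ℝ} {q : ℝ} (hq : 0 ≤ q) (he : ∀ u, 0 ≤ e u) {M : ℕ}
    {s t : ℤ} (hs : s ∈ Finset.Icc (-(M : ℤ)) M) (ht : t ∈ Finset.Icc (-(M : ℤ)) M)
    (hstep : ∀ u, u ∈ uIcc s t → u + 1 ∈ uIcc s t → q * (h u - h (u + 1)) ^ 2 ≤ e u) :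
    q * (h s - h t) ^ 2 ≤ 2 * M * ∑ u ∈ Finset.Icc (-(M : ℤ)) M, e u := by
  wlog hst : s ≤ t generalizing s t
  · rw [sub_sq_comm]
    exact this ht hs (by rwa [uIcc_comm]) (le_of_not_ge hst)
  rw [Finset.mem_Icc] at hs ht
  rw [uIcc_of_le hst] at hstep
  obtain ⟨n, rfl⟩ := Int.le.dest hst
  have hn : (n : ℝ) ≤ 2 * M := by
    have : n ≤ 2 * M := by omega
    exact_mod_cast this
  have hsteps : ∑ k ∈ Finset.range n, q * (h (s + k) - h (s + (k + 1 : ℕ))) ^ 2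
      ≤ ∑ u ∈ Finset.Icc (-(M : ℤ)) M, e u :=
    calc ∑ k ∈ Finset.range n, q * (h (s + k) - h (s + (k + 1 : ℕ))) ^ 2
        ≤ ∑ k ∈ Finset.range n, e (s + k) := by
          refine Finset.sum_le_sum fun k hk => ?_
          rw [Finset.mem_range] at hk
          rw [Nat.cast_succ, ← add_assoc]
          exact hstep _ ⟨by omega, by omega⟩ ⟨by omega, by omega⟩
      _ = ∑ u ∈ (Finset.range n).image fun k : ℕ => s + k, e u := by
          rw [Finset.sum_image fun _ _ _ _ hkl => by simpa using hkl]
      _ ≤ ∑ u ∈ Finset.Icc (-(M : ℤ)) M, e u := by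
          refine Finset.sum_le_sum_of_subset_of_nonneg (fun u hu => ?_) fun u _ _ => he u
          obtain ⟨k, hk, rfl⟩ := Finset.mem_image.1 hu
          rw [Finset.mem_range] at hk
          exact Finset.mem_Icc.2 ⟨by omega, by omega⟩
  calc q * (h s - h (s + n)) ^ 2
      ≤ q * (n * ∑ k ∈ Finset.range n, (h (s + k) - h (s + (k + 1 : ℕ))) ^ 2) := by
        gcongr
        simpa using sq_sub_le_mul_sum_sq_sub_succ (fun k : ℕ => h (s + k)) n
    _ = n * ∑ k ∈ Finset.range n, q * (h (s + k) - h (s + (k + 1 : ℕ))) ^ 2 := by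
        rw [← Finset.mul_sum]; ring
    _ ≤ 2 * M * ∑ u ∈ Finset.Icc (-(M : ℤ)) M, e u := by
        gcongr

variable {ι : Type*} [Fintype ι] [DecidableEq ι]

lemma exists_enumeration_from (j : ι) :
    ∃ σ : ℕ → ι, σ 0 = j ∧ (Finset.range (Fintype.card ι)).image σ = Finset.univ := by
  set l := j :: (Finset.univ.erase j).toList
  have hlength : l.length = Fintype.card ι := by
    simp [l, Finset.card_univ, Nat.sub_add_cancel (Fintype.card_pos_iff.2 ⟨j⟩)]
  refine ⟨fun k => l.getD k j, rfl, Finset.eq_univ_of_forall fun i => ?_⟩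
  have hi : i ∈ l := by
    by_cases hij : i = j <;> simp [l, hij]
  obtain ⟨k, hk, hki⟩ := List.mem_iff_getElem.1 hi
  exact Finset.mem_image.2 ⟨k, Finset.mem_range.2 (hlength ▸ hk), by simp [hk, hki]⟩

lemma sq_sub_le_mul_sum_sq_sub_update {α : Type*} {σ : ℕ → ι} {n : ℕ}
    (hσ : (Finset.range n).image σ = Finset.univ) (g : (ι → α) → ℝ) (x b : ι → α) :
    (g x - g b) ^ 2 ≤ n * ∑ k ∈ Finset.range n,
      (g (((Finset.range k).image σ).piecewise b x)
        - g (Function.update (((Finset.range k).image σ).piecewise b x) (σ k) (b (σ k)))) ^ 2 := by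
  have hsucc : ∀ k, ((Finset.range (k + 1)).image σ).piecewise b x
      = Function.update (((Finset.range k).image σ).piecewise b x) (σ k) (b (σ k)) := fun k => by
    rw [Finset.range_add_one, Finset.image_insert, Finset.piecewise_insert]
  have h := sq_sub_le_mul_sum_sq_sub_succ
    (fun k => g (((Finset.range k).image σ).piecewise b x)) n
  rw [hσ, Finset.range_zero, Finset.image_empty, Finset.piecewise_empty, Finset.piecewise_univ] at h
  simpa only [hsucc] using h

end Telescoping

section PathVertices

variable {ι : Type*} [DecidableEq ι]

lemma sq_le_max_sq_of_mem_uIcc {s t u : ℤ} (hu : u ∈ uIcc s t) : u ^ 2 ≤ max (s ^ 2) (t ^ 2) := by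
  have habs : |u| ≤ max |s| |t| := by
    rcases mem_uIcc.1 hu with ⟨h₁, h₂⟩ | ⟨h₁, h₂⟩
    · exact abs_le_max_abs_abs h₁ h₂
    · exact max_comm |s| |t| ▸ abs_le_max_abs_abs h₁ h₂
  simpa only [le_max_iff, sq_le_sq] using habs

lemma sq_update_piecewise_le_max {x b : ι → ℤ} {S : Finset ι} {i : ι} {u : ℤ}
    (hu : u ∈ uIcc (S.piecewise b x i) (b i)) (l : ι) :
    Function.update (S.piecewise b x) i u l ^ 2 ≤ max (x l ^ 2) (b l ^ 2) := by
  rcases eq_or_ne l i with rfl | hl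
  · rw [Function.update_self]
    refine (sq_le_max_sq_of_mem_uIcc hu).trans ?_
    by_cases hlS : l ∈ S <;> simp [hlS]
  · by_cases hlS : l ∈ S <;> simp [hl, hlS]

lemma sq_update_piecewise_le_add {x b : ι → ℤ} {S : Finset ι} {i : ι} {u : ℤ}
    (hu : u ∈ uIcc (S.piecewise b x i) (b i)) (l : ι) :
    Function.update (S.piecewise b x) i u l ^ 2 ≤ x l ^ 2 + b l ^ 2 :=
  (sq_update_piecewise_le_max hu l).trans <|
    max_le (le_add_of_nonneg_right (sq_nonneg _)) (le_add_of_nonneg_left (sq_nonneg _))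

lemma update_piecewise_eq_of_mem {x b : ι → ℤ} {S : Finset ι} {i j : ι} {u : ℤ}
    (hu : u ∈ uIcc (S.piecewise b x i) (b i)) (hj : j ∈ S) :
    Function.update (S.piecewise b x) i u j = b j := by
  rcases eq_or_ne j i with rfl | hji
  · simpa [hj] using hu
  · simp [hji, hj]

end PathVertices

section LatticeGeometry

/-- The squared Euclidean norm of a lattice point, kept as an integer so that comparisons of
distances to the origin are integer inequalities. -/
def sqNorm {ι : Type*} [Fintype ι] (x : ι → ℤ) : ℤ := ∑ i, x i ^ 2

/-- The cube `[-M, M] ^ ι`; large cubes contain the domain, and a small one consists of the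
endpoints of the canonical paths. -/
def cube (ι : Type*) [Fintype ι] [DecidableEq ι] (M : ℕ) : Finset (ι → ℤ) :=
  Fintype.piFinset fun _ => Finset.Icc (-(M : ℤ)) M

variable {ι : Type*} [Fintype ι]

lemma sqNorm_nonneg (x : ι → ℤ) : 0 ≤ sqNorm x :=
  Finset.sum_nonneg fun i _ => sq_nonneg (x i)

lemma sq_le_sqNorm (x : ι → ℤ) (i : ι) : x i ^ 2 ≤ sqNorm x :=
  Finset.single_le_sum (fun i _ => sq_nonneg (x i)) (Finset.mem_univ i)

lemma sqNorm_le_card_mul {x : ι → ℤ} {a : ℤ} (h : ∀ i, x i ^ 2 ≤ a) :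
    sqNorm x ≤ Fintype.card ι * a := by
  simpa [sqNorm] using Finset.sum_le_card_nsmul Finset.univ (fun i => x i ^ 2) a fun i _ => h i

lemma sqNorm_le_add {w x b : ι → ℤ} (h : ∀ i, w i ^ 2 ≤ x i ^ 2 + b i ^ 2) :
    sqNorm w ≤ sqNorm x + sqNorm b := by
  simpa [sqNorm, Finset.sum_add_distrib] using Finset.sum_le_sum fun i (_ : i ∈ Finset.univ) => h i

lemma abs_lt_of_sqNorm_lt_sq {x : ι → ℤ} {r : ℕ} (h : sqNorm x < (r : ℤ) ^ 2) (i : ι) :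
    |x i| < r :=
  abs_lt_of_sq_lt_sq ((sq_le_sqNorm x i).trans_lt h) r.cast_nonneg

lemma card_le_of_sqNorm_lt_sq {A : Finset (ι → ℤ)} {r : ℕ} (hA : ∀ x ∈ A, sqNorm x < (r : ℤ) ^ 2) :
    A.card ≤ (2 * r) ^ Fintype.card ι := by
  -- Sides half-open: a closed cube would not be small enough for `r = 0`.
  have hsub : A ⊆ Fintype.piFinset fun _ => Finset.Ico (-(r : ℤ)) r := fun x hx =>
    Fintype.mem_piFinset.2 fun i =>
      have hi := abs_lt.1 (abs_lt_of_sqNorm_lt_sq (hA x hx) i)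
      Finset.mem_Ico.2 ⟨hi.1.le, hi.2⟩
  refine (Finset.card_le_card hsub).trans_eq ?_
  rw [Fintype.card_piFinset, Finset.prod_const, Int.card_Ico, Finset.card_univ]
  congr 1
  omega

lemma sqNorm_le_of_sqNorm_le_sq {w x b : ι → ℤ} {j : ι} (hbig : sqNorm b ≤ x j ^ 2)
    (hj : w j = b j) (hadd : ∀ l, w l ^ 2 ≤ x l ^ 2 + b l ^ 2) : sqNorm w ≤ sqNorm x := by
  have hrest : ∑ l ∈ Finset.univ.erase j, w l ^ 2
      ≤ ∑ l ∈ Finset.univ.erase j, x l ^ 2 + ∑ l ∈ Finset.univ.erase j, b l ^ 2 := by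
    rw [← Finset.sum_add_distrib]
    exact Finset.sum_le_sum fun l _ => hadd l
  simp only [sqNorm, ← Finset.add_sum_erase Finset.univ _ (Finset.mem_univ j), hj] at hbig ⊢
  linarith

variable [DecidableEq ι]

lemma mem_cube {M : ℕ} {x : ι → ℤ} : x ∈ cube ι M ↔ ∀ i, |x i| ≤ M := by
  simp [cube, abs_le]

lemma card_cube (M : ℕ) : (cube ι M).card = (2 * M + 1) ^ Fintype.card ι := by
  rw [cube, Fintype.card_piFinset, Finset.prod_const, Int.card_Icc, Finset.card_univ]
  congr 1
  omega

lemma cube_subset_cube {m M : ℕ} (h : m ≤ M) : cube ι m ⊆ cube ι M := fun _ hx =>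
  mem_cube.2 fun i => (mem_cube.1 hx i).trans (by exact_mod_cast h)

lemma sqNorm_le_of_mem_cube {m : ℕ} {b : ι → ℤ} (hb : b ∈ cube ι m) :
    sqNorm b ≤ Fintype.card ι * (m : ℤ) ^ 2 :=
  sqNorm_le_card_mul fun i => sq_le_sq.2 (by simpa using mem_cube.1 hb i)

lemma sqNorm_update_le {x : ι → ℤ} {j : ι} {u : ℤ} (hu : u ^ 2 ≤ x j ^ 2) :
    sqNorm (Function.update x j u) ≤ sqNorm x :=
  Finset.sum_le_sum fun l _ => by
    rcases eq_or_ne l j with rfl | hl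
    · simpa using hu
    · simp [hl]

lemma sqNorm_update_piecewise_le_max {m : ℕ} {x b : ι → ℤ} (hb : b ∈ cube ι m) {j : ι}
    (hj : ∀ l, x l ^ 2 ≤ x j ^ 2) {S : Finset ι} {i : ι} (hS : S = ∅ ∧ i = j ∨ j ∈ S) {u : ℤ}
    (hu : u ∈ uIcc (S.piecewise b x i) (b i)) :
    sqNorm (Function.update (S.piecewise b x) i u)
      ≤ max (sqNorm x) (((2 * Fintype.card ι * m : ℕ) : ℤ) ^ 2) := by
  have hadd := sq_update_piecewise_le_add hu
  have hbnorm := sqNorm_le_of_mem_cube hb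
  rcases le_total (sqNorm b) (x j ^ 2) with hbig | hsmall
  · refine le_max_of_le_left ?_
    rcases hS with ⟨rfl, rfl⟩ | hjS
    · rw [Finset.piecewise_empty] at hu ⊢
      refine sqNorm_update_le ((sq_le_max_sq_of_mem_uIcc hu).trans (max_le le_rfl ?_))
      exact (sq_le_sqNorm b i).trans hbig
    · exact sqNorm_le_of_sqNorm_le_sq hbig (update_piecewise_eq_of_mem hu hjS) hadd
  · refine le_max_of_le_right ?_
    have hcard : (1 : ℤ) ≤ Fintype.card ι := by exact_mod_cast Fintype.card_pos_iff.2 ⟨j⟩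
    calc sqNorm (Function.update (S.piecewise b x) i u)
        ≤ sqNorm x + sqNorm b := sqNorm_le_add hadd
      _ ≤ Fintype.card ι * sqNorm b + Fintype.card ι * sqNorm b := by
          gcongr
          · exact sqNorm_le_card_mul fun l => (hj l).trans hsmall
          · exact le_mul_of_one_le_left (sqNorm_nonneg b) hcard
      _ = 2 * Fintype.card ι * sqNorm b := by ring
      _ ≤ 2 * Fintype.card ι * (Fintype.card ι * (m : ℤ) ^ 2) := by gcongr
      _ ≤ ((2 * Fintype.card ι * m : ℕ) : ℤ) ^ 2 := by
          push_cast
          nlinarith only [sq_nonneg ((Fintype.card ι : ℤ) * m)]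

end LatticeGeometry

section AlmostMonotoneDensity

lemma mul_one_sub_sum_filter_lt_le {α β : Type*} [LinearOrder β] {U : Finset α} {p : α → ℝ}
    {ρ : α → β} {c : ℝ} {v : α} (hsum : ∑ y ∈ U, p y = 1) (hp : 0 ≤ p v)
    (hmono : ∀ y ∈ U, ρ v ≤ ρ y → c * p y ≤ p v) :
    c * (1 - ∑ y ∈ U with ρ y < ρ v, p y) ≤ U.card * p v := by
  have hsplit := Finset.sum_filter_add_sum_filter_not U (fun y => ρ y < ρ v) p
  rw [hsum] at hsplit
  calc c * (1 - ∑ y ∈ U with ρ y < ρ v, p y)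
      = ∑ y ∈ U with ¬ ρ y < ρ v, c * p y := by rw [← Finset.mul_sum, ← hsplit]; ring
    _ ≤ (U.filter fun y => ¬ ρ y < ρ v).card • p v :=
        Finset.sum_le_card_nsmul _ _ _ fun y hy =>
          hmono y (Finset.mem_filter.1 hy).1 (not_lt.1 (Finset.mem_filter.1 hy).2)
    _ ≤ U.card * p v := by
        rw [nsmul_eq_mul]
        gcongr
        exact Finset.filter_subset _ _

variable {ι : Type*} [Fintype ι]

lemma sum_filter_sqNorm_lt_le {U : Finset (ι → ℤ)} {p : (ι → ℤ) → ℝ} {q : ℝ}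
    (hq : 0 ≤ q) (hp : ∀ x ∈ U, p x ≤ q) {a : ℤ} {r : ℕ} (ha : a ≤ (r : ℤ) ^ 2) :
    ∑ y ∈ U with sqNorm y < a, p y ≤ (2 * r : ℝ) ^ Fintype.card ι * q :=
  calc ∑ y ∈ U with sqNorm y < a, p y
      ≤ (U.filter fun y => sqNorm y < a).card • q :=
        Finset.sum_le_card_nsmul _ _ _ fun y hy => hp y (Finset.mem_filter.1 hy).1
    _ ≤ (2 * r : ℝ) ^ Fintype.card ι * q := by
        have hcard := card_le_of_sqNorm_lt_sq (A := U.filter fun y => sqNorm y < a)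
          fun y hy => (Finset.mem_filter.1 hy).2.trans_le ha
        rw [nsmul_eq_mul]
        gcongr
        exact_mod_cast hcard

/-- The weight `p` on `U` does not drop by more than the factor `κ` when moving from a point of `U`
towards the origin or into the central ball of radius `r`. This is all that the path argument needs
to know about the domain and its weight. -/
def CentrallyBounded (U : Finset (ι → ℤ)) (p : (ι → ℤ) → ℝ) (κ : ℝ) (r : ℕ) : Prop :=
  ∀ x ∈ U, ∀ w, sqNorm w ≤ max (sqNorm x) ((r : ℤ) ^ 2) → w ∈ U ∧ κ * p x ≤ p w

lemma centrallyBounded_of_almostMonotone {U : Finset (ι → ℤ)} {p : (ι → ℤ) → ℝ}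
    {c₀ q C : ℝ} {r s : ℕ} (hU : ∀ x, x ∈ U ↔ sqNorm x < (s : ℤ) ^ 2) (hrs : r < s)
    (hc₀ : 0 ≤ c₀) (hC : 0 < C) (hp : ∀ x ∈ U, 0 ≤ p x) (hsum : ∑ x ∈ U, p x = 1)
    (hmono : ∀ x ∈ U, ∀ y ∈ U, sqNorm x ≤ sqNorm y → c₀ * p y ≤ p x)
    (hq : 0 ≤ q) (hpq : ∀ x ∈ U, p x ≤ q) (hcenter : (2 * r : ℝ) ^ Fintype.card ι * q ≤ 1 / 2)
    (hvolume : U.card * q ≤ C) :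
    CentrallyBounded U p (min c₀ (c₀ / (2 * C))) r := by
  intro x hx w hw
  rcases le_max_iff.1 hw with hwx | hwr
  · have hwU : w ∈ U := (hU w).2 (hwx.trans_lt ((hU x).1 hx))
    refine ⟨hwU, le_trans ?_ (hmono w hwU x hx hwx)⟩
    exact mul_le_mul_of_nonneg_right (min_le_left _ _) (hp x hx)
  · have hwU : w ∈ U := (hU w).2 (hwr.trans_lt (by gcongr))
    refine ⟨hwU, le_trans (mul_le_mul_of_nonneg_right (min_le_right _ _) (hp x hx)) ?_⟩
    have hhalf : c₀ * (1 / 2) ≤ U.card * p w :=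
      calc c₀ * (1 / 2) ≤ c₀ * (1 - ∑ y ∈ U with sqNorm y < sqNorm w, p y) := by
            gcongr
            linarith [sum_filter_sqNorm_lt_le hq hpq hwr]
        _ ≤ U.card * p w :=
            mul_one_sub_sum_filter_lt_le hsum (hp w hwU) fun y hy => hmono w hwU y hy
    rw [div_mul_eq_mul_div, div_le_iff₀ (by positivity)]
    calc c₀ * p x ≤ 2 * (c₀ * (1 / 2)) * q := by
          linarith [mul_le_mul_of_nonneg_left (hpq x hx) hc₀]
      _ ≤ 2 * (U.card * p w) * q := by gcongr
      _ = p w * (2 * (U.card * q)) := by ring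
      _ ≤ p w * (2 * C) := by
          have := hp w hwU
          gcongr

end AlmostMonotoneDensity

section EdgeEnergy

/-- The contribution of the edge `{w, w + e_i}` to the Dirichlet form, without the factor
`1 / (2d)`; edges not contained in `U` contribute `0`. -/
def edgeEnergy {ι : Type*} [DecidableEq ι] (U : Finset (ι → ℤ)) (f g : (ι → ℤ) → ℝ) (i : ι)
    (w : ι → ℤ) : ℝ :=
  if w ∈ U ∧ w + Pi.single i 1 ∈ U then
    f w * f (w + Pi.single i 1) * (g w - g (w + Pi.single i 1)) ^ 2 else 0

/-- The energy of all edges in `[-M, M] ^ ι` on the line through `v` in direction `i`. -/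
def lineEnergy {ι : Type*} [DecidableEq ι] (U : Finset (ι → ℤ)) (f g : (ι → ℤ) → ℝ) (M : ℕ) (i : ι)
    (v : ι → ℤ) : ℝ :=
  ∑ u ∈ Finset.Icc (-(M : ℤ)) M, edgeEnergy U f g i (Function.update v i u)

variable {ι : Type*} [DecidableEq ι] {U : Finset (ι → ℤ)} {f : (ι → ℤ) → ℝ}

lemma edgeEnergy_nonneg (hf : ∀ x ∈ U, 0 ≤ f x) (g : (ι → ℤ) → ℝ) (i : ι) (w : ι → ℤ) :
    0 ≤ edgeEnergy U f g i w := by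
  unfold edgeEnergy
  split_ifs with h
  · exact mul_nonneg (mul_nonneg (hf _ h.1) (hf _ h.2)) (sq_nonneg _)
  · exact le_rfl

lemma lineEnergy_nonneg (hf : ∀ x ∈ U, 0 ≤ f x) (g : (ι → ℤ) → ℝ) (M : ℕ) (i : ι) (v : ι → ℤ) :
    0 ≤ lineEnergy U f g M i v :=
  Finset.sum_nonneg fun _ _ => edgeEnergy_nonneg hf g i _

lemma mul_sq_sub_le_edgeEnergy (hf : ∀ x ∈ U, 0 ≤ f x) (g : (ι → ℤ) → ℝ) {q : ℝ} {i : ι}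
    {w : ι → ℤ} (hw : w ∈ U ∧ q ≤ f w ^ 2)
    (hw' : w + Pi.single i 1 ∈ U ∧ q ≤ f (w + Pi.single i 1) ^ 2) :
    q * (g w - g (w + Pi.single i 1)) ^ 2 ≤ edgeEnergy U f g i w := by
  rw [edgeEnergy, if_pos ⟨hw.1, hw'.1⟩]
  gcongr
  have h₁ := hf _ hw.1
  have h₂ := hf _ hw'.1
  -- The product of two nonnegative numbers is at least the smaller of their squares.
  rcases le_total (f w) (f (w + Pi.single i 1)) with h | h
  · exact hw.2.trans (by rw [sq]; gcongr)
  · exact hw'.2.trans (by rw [sq]; gcongr)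

lemma update_add_single (v : ι → ℤ) (i : ι) (u : ℤ) :
    Function.update v i u + Pi.single i 1 = Function.update v i (u + 1) := by
  ext l
  rcases eq_or_ne l i with rfl | hl
  · simp
  · simp [hl]

lemma mul_sq_sub_update_le_lineEnergy (hf : ∀ x ∈ U, 0 ≤ f x) (g : (ι → ℤ) → ℝ) {q : ℝ}
    (hq : 0 ≤ q) {M : ℕ} {v : ι → ℤ} {i : ι} {t : ℤ} (hv : v i ∈ Finset.Icc (-(M : ℤ)) M)
    (ht : t ∈ Finset.Icc (-(M : ℤ)) M)
    (hpath : ∀ u ∈ uIcc (v i) t, Function.update v i u ∈ U ∧ q ≤ f (Function.update v i u) ^ 2) :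
    q * (g v - g (Function.update v i t)) ^ 2 ≤ 2 * M * lineEnergy U f g M i v := by
  have hsegment := mul_sq_sub_le_two_mul_sum_Icc (h := fun u => g (Function.update v i u))
    (e := fun u => edgeEnergy U f g i (Function.update v i u)) hq
    (fun _ => edgeEnergy_nonneg hf g i _) hv ht fun u hu hu' => by
      have hstep := hpath (u + 1) hu'
      rw [← update_add_single] at hstep ⊢
      exact mul_sq_sub_le_edgeEnergy hf g (hpath u hu) hstep
  simpa only [Function.update_eq_self, lineEnergy] using hsegment

end EdgeEnergy

section PathMethod

/-- The variance of `g` under the weights `p` on `U`; it is meant for weights of total mass `1`. -/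
def weightedVariance {α : Type*} (U : Finset α) (p g : α → ℝ) : ℝ :=
  ∑ x ∈ U, p x * g x ^ 2 - (∑ x ∈ U, p x * g x) ^ 2

lemma weightedVariance_le_sum_mul_sq_sub {α : Type*} {U : Finset α} {p : α → ℝ}
    (hp : ∑ x ∈ U, p x = 1) (g : α → ℝ) (a : ℝ) :
    weightedVariance U p g ≤ ∑ x ∈ U, p x * (g x - a) ^ 2 := by
  have hexpand : ∑ x ∈ U, p x * (g x - a) ^ 2
      = ∑ x ∈ U, p x * g x ^ 2 - 2 * a * ∑ x ∈ U, p x * g x + a ^ 2 * ∑ x ∈ U, p x := by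
    rw [Finset.mul_sum, Finset.mul_sum, ← Finset.sum_sub_distrib, ← Finset.sum_add_distrib]
    exact Finset.sum_congr rfl fun x _ => by ring
  rw [weightedVariance, hexpand, hp]
  linarith [sq_nonneg (∑ x ∈ U, p x * g x - a)]

lemma card_mul_weightedVariance_le {α : Type*} {U : Finset α} {p : α → ℝ}
    (hp : ∑ x ∈ U, p x = 1) (g : α → ℝ) (B : Finset α) :
    B.card * weightedVariance U p g ≤ ∑ x ∈ U, ∑ b ∈ B, p x * (g x - g b) ^ 2 := by
  rw [Finset.sum_comm, ← nsmul_eq_mul]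
  exact Finset.card_nsmul_le_sum _ _ _ fun b _ => weightedVariance_le_sum_mul_sq_sub hp g (g b)

variable {ι : Type*} [Fintype ι] [DecidableEq ι] {U : Finset (ι → ℤ)} {f : (ι → ℤ) → ℝ} {κ : ℝ}
  {m M : ℕ}

lemma mul_sq_sub_le_lineEnergy_piecewise (hf : ∀ x ∈ U, 0 ≤ f x) (hκ : 0 ≤ κ)
    (hU : U ⊆ cube ι M) (hm : m ≤ M)
    (hbound : CentrallyBounded U (fun x => f x ^ 2) κ (2 * Fintype.card ι * m)) (g : (ι → ℤ) → ℝ)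
    {x b : ι → ℤ} (hx : x ∈ U) (hb : b ∈ cube ι m) {i j : ι} (hj : ∀ l, x l ^ 2 ≤ x j ^ 2)
    {S : Finset ι} (hS : S = ∅ ∧ i = j ∨ j ∈ S) :
    κ * f x ^ 2 * (g (S.piecewise b x) - g (Function.update (S.piecewise b x) i (b i))) ^ 2
      ≤ 2 * M * lineEnergy U f g M i (S.piecewise b x) := by
  have hxM := Fintype.mem_piFinset.1 (hU hx) i
  have hbM := Fintype.mem_piFinset.1 (cube_subset_cube hm hb) i
  refine mul_sq_sub_update_le_lineEnergy hf g (by positivity)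
    (S.piecewise_cases b x (· ∈ Finset.Icc (-(M : ℤ)) M) hbM hxM) hbM fun u hu => ?_
  exact hbound x hx _ (sqNorm_update_piecewise_le_max hb hj hS hu)

lemma mul_sq_sub_le_sum_lineEnergy [Nonempty ι] (hf : ∀ x ∈ U, 0 ≤ f x) (hκ : 0 ≤ κ)
    (hU : U ⊆ cube ι M) (hm : m ≤ M)
    (hbound : CentrallyBounded U (fun x => f x ^ 2) κ (2 * Fintype.card ι * m)) (g : (ι → ℤ) → ℝ)
    {x b : ι → ℤ} (hx : x ∈ U) (hb : b ∈ cube ι m) :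
    κ * f x ^ 2 * (g x - g b) ^ 2 ≤ 2 * M * Fintype.card ι ^ 2 *
      ∑ S : Finset ι, ∑ i, lineEnergy U f g M i (S.piecewise b x) := by
  set n := Fintype.card ι
  obtain ⟨j, hj⟩ := Finite.exists_max fun l => x l ^ 2
  obtain ⟨σ, hσ0, hσ⟩ := exists_enumeration_from j
  set S : ℕ → Finset ι := fun k => (Finset.range k).image σ with hSdef
  have hS : ∀ k, S k = ∅ ∧ σ k = j ∨ j ∈ S k := by
    rintro (_ | k)
    · exact Or.inl ⟨by simp [hSdef], hσ0⟩
    · exact Or.inr (Finset.mem_image.2 ⟨0, by simp, hσ0⟩)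
  have hline : ∀ k, lineEnergy U f g M (σ k) ((S k).piecewise b x)
      ≤ ∑ S : Finset ι, ∑ i, lineEnergy U f g M i (S.piecewise b x) := fun k =>
    (Finset.single_le_sum (f := fun i => lineEnergy U f g M i ((S k).piecewise b x))
        (fun _ _ => lineEnergy_nonneg hf g M _ _) (Finset.mem_univ (σ k))).trans
      (Finset.single_le_sum (f := fun S : Finset ι => ∑ i, lineEnergy U f g M i (S.piecewise b x))
        (fun _ _ => Finset.sum_nonneg fun _ _ => lineEnergy_nonneg hf g M _ _)
        (Finset.mem_univ (S k)))
  calc κ * f x ^ 2 * (g x - g b) ^ 2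
      ≤ κ * f x ^ 2 * (n * ∑ k ∈ Finset.range n, (g ((S k).piecewise b x)
          - g (Function.update ((S k).piecewise b x) (σ k) (b (σ k)))) ^ 2) := by
        gcongr
        exact sq_sub_le_mul_sum_sq_sub_update hσ g x b
    _ = n * ∑ k ∈ Finset.range n, κ * f x ^ 2 * (g ((S k).piecewise b x)
          - g (Function.update ((S k).piecewise b x) (σ k) (b (σ k)))) ^ 2 := by
        rw [← Finset.mul_sum]; ring
    _ ≤ n * ∑ _k ∈ Finset.range n,
          2 * M * ∑ S : Finset ι, ∑ i, lineEnergy U f g M i (S.piecewise b x) := by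
        refine mul_le_mul_of_nonneg_left (Finset.sum_le_sum fun k _ => ?_) n.cast_nonneg
        exact (mul_sq_sub_le_lineEnergy_piecewise hf hκ hU hm hbound g hx hb hj (hS k)).trans
          (mul_le_mul_of_nonneg_left (hline k) (by positivity))
    _ = 2 * M * n ^ 2 * ∑ S : Finset ι, ∑ i, lineEnergy U f g M i (S.piecewise b x) := by
        rw [Finset.sum_const, Finset.card_range, nsmul_eq_mul]; ring

lemma sum_sum_lineEnergy_piecewise_le (hf : ∀ x ∈ U, 0 ≤ f x) (g : (ι → ℤ) → ℝ)
    {A B : Finset (ι → ℤ)} (hA : A ⊆ cube ι M) (hB : B ⊆ cube ι M) (S : Finset ι) (i : ι) :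
    ∑ x ∈ A, ∑ b ∈ B, lineEnergy U f g M i (S.piecewise b x)
      ≤ (cube ι M).card * ((2 * M + 1) * ∑ w ∈ cube ι M, edgeEnergy U f g i w) := by
  have hcard : (Finset.Icc (-(M : ℤ)) M).card = 2 * M + 1 := by
    rw [Int.card_Icc]; omega
  have h := sum_sum_sum_update_piecewise_le _ S i (edgeEnergy_nonneg hf g i) hA hB
  rw [hcard] at h
  exact_mod_cast h

lemma mul_card_mul_weightedVariance_le [Nonempty ι] (hf : ∀ x ∈ U, 0 ≤ f x) (hκ : 0 ≤ κ)
    (hU : U ⊆ cube ι M) (hm : m ≤ M)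
    (hbound : CentrallyBounded U (fun x => f x ^ 2) κ (2 * Fintype.card ι * m))
    (hsum : ∑ x ∈ U, f x ^ 2 = 1) {g : (ι → ℤ) → ℝ} {E : ℝ}
    (hE : ∀ i, ∑ w ∈ cube ι M, edgeEnergy U f g i w ≤ E) :
    κ * ((cube ι m).card * weightedVariance U (fun x => f x ^ 2) g)
      ≤ 2 * M * (2 * M + 1) * (cube ι M).card * (Fintype.card ι ^ 3 * 2 ^ Fintype.card ι * E) := by
  set n := Fintype.card ι
  calc κ * ((cube ι m).card * weightedVariance U (fun x => f x ^ 2) g)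
      ≤ κ * ∑ x ∈ U, ∑ b ∈ cube ι m, f x ^ 2 * (g x - g b) ^ 2 := by
        gcongr
        exact card_mul_weightedVariance_le hsum g (cube ι m)
    _ = ∑ x ∈ U, ∑ b ∈ cube ι m, κ * f x ^ 2 * (g x - g b) ^ 2 := by
        simp only [Finset.mul_sum, mul_assoc]
    _ ≤ ∑ x ∈ U, ∑ b ∈ cube ι m, 2 * M * n ^ 2 *
          ∑ S : Finset ι, ∑ i, lineEnergy U f g M i (S.piecewise b x) :=
        Finset.sum_le_sum fun x hx => Finset.sum_le_sum fun b hb =>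
          mul_sq_sub_le_sum_lineEnergy hf hκ hU hm hbound g hx hb
    _ = 2 * M * n ^ 2 * ∑ S : Finset ι, ∑ i,
          ∑ x ∈ U, ∑ b ∈ cube ι m, lineEnergy U f g M i (S.piecewise b x) := by
        simp only [← Finset.mul_sum]
        rw [← Finset.sum_product', Finset.sum_comm]
        congr 1
        refine Finset.sum_congr rfl fun S _ => ?_
        rw [Finset.sum_comm]
        exact Finset.sum_congr rfl fun i _ => Finset.sum_product ..
    _ ≤ 2 * M * n ^ 2 * ∑ _S : Finset ι, ∑ _i : ι, (cube ι M).card * ((2 * M + 1) * E) := by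
        gcongr with S _ i _
        refine (sum_sum_lineEnergy_piecewise_le hf g hU (cube_subset_cube hm) S i).trans ?_
        gcongr
        exact hE i
    _ = 2 * M * (2 * M + 1) * (cube ι M).card * (n ^ 3 * 2 ^ n * E) := by
        simp only [Finset.sum_const, Finset.card_univ, Fintype.card_finset, nsmul_eq_mul]
        push_cast
        ring

end PathMethod

section EuclideanBall

variable {d N R : ℕ} {U : Finset (Fin d → ℤ)} {f : (Fin d → ℤ) → ℝ}

lemma norm_toR_sq (x : Fin d → ℤ) : ‖toR d x‖ ^ 2 = sqNorm x := by
  rw [EuclideanSpace.norm_sq_eq]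
  simp [toR, sqNorm]

lemma norm_toR_le_norm_toR {x y : Fin d → ℤ} (h : sqNorm x ≤ sqNorm y) :
    ‖toR d x‖ ≤ ‖toR d y‖ := by
  refine le_of_sq_le_sq ?_ (norm_nonneg _)
  rw [norm_toR_sq, norm_toR_sq]
  exact_mod_cast h

lemma mem_UNf {x : Fin d → ℤ} : x ∈ UNf d N R ↔ sqNorm x < ((N * R : ℕ) : ℤ) ^ 2 := by
  have hnorm : ‖toR d x‖ < (N : ℝ) * R ↔ sqNorm x < ((N * R : ℕ) : ℤ) ^ 2 := by
    rw [← sq_lt_sq₀ (norm_nonneg _) (by positivity), norm_toR_sq]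
    exact_mod_cast Iff.rfl
  rw [UNf, Finset.mem_filter, hnorm, Finset.mem_Icc]
  refine ⟨And.right, fun h => ⟨⟨fun i => ?_, fun i => ?_⟩, h⟩⟩
  · exact (abs_lt.1 (abs_lt_of_sqNorm_lt_sq h i)).1.le
  · exact (abs_lt.1 (abs_lt_of_sqNorm_lt_sq h i)).2.le

lemma UNf_subset_cube : UNf d N R ⊆ cube (Fin d) (N * R) := fun _ hx =>
  mem_cube.2 fun i => (abs_lt_of_sqNorm_lt_sq (mem_UNf.1 hx) i).le

lemma card_UNf_mul_le (hN : 0 < N) {c : ℝ} (hc : 0 ≤ c) :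
    (UNf d N R).card * (c * (N : ℝ) ^ (-(d : ℤ))) ≤ c * (2 * R) ^ d := by
  have hcard : ((UNf d N R).card : ℝ) ≤ (2 * (N * R)) ^ d := by
    exact_mod_cast (card_le_of_sqNorm_lt_sq fun x hx => mem_UNf.1 hx).trans_eq (by simp)
  have hNpos : (0 : ℝ) < N := by exact_mod_cast hN
  calc (UNf d N R).card * (c * (N : ℝ) ^ (-(d : ℤ)))
      ≤ (2 * (N * R)) ^ d * (c * (N : ℝ) ^ (-(d : ℤ))) := by gcongr
    _ = c * (2 * R) ^ d := by
        rw [zpow_neg, zpow_natCast, show (2 * (N * R) : ℝ) = 2 * R * N by ring, mul_pow]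
        field_simp [hNpos.ne']

lemma card_cube_mul_le {ι : Type*} [Fintype ι] [DecidableEq ι] {K : ℕ} (hN : 0 < N) (hR : 0 < R)
    (hK : 0 < K) :
    (cube ι (N * R)).card ≤ (3 * R * K) ^ Fintype.card ι * (cube ι (N / K)).card := by
  rw [card_cube, card_cube, ← mul_pow]
  refine Nat.pow_le_pow_left ?_ _
  have hNK : N ≤ K * (N / K + 1) := (Nat.lt_mul_div_succ N hK).le
  calc 2 * (N * R) + 1 ≤ 3 * R * N := by linarith [Nat.mul_pos hN hR]
    _ ≤ 3 * R * (K * (N / K + 1)) := by gcongr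
    _ ≤ 3 * R * (K * (2 * (N / K) + 1)) := by gcongr; omega
    _ = 3 * R * K * (2 * (N / K) + 1) := by ring

lemma latAdj_add_single (w : Fin d → ℤ) (i : Fin d) : latAdj d w (w + Pi.single i 1) := by
  have hsub : toR d w - toR d (w + Pi.single i 1) = -EuclideanSpace.single i (1 : ℝ) := by
    ext l
    rcases eq_or_ne l i with rfl | hl
    · simp [toR]
    · simp [toR, hl]
  simp [latAdj, hsub]

lemma sum_edgeEnergy_le (hf : ∀ x ∈ U, 0 ≤ f x) (g : (Fin d → ℤ) → ℝ) (i : Fin d)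
    {Q : Finset (Fin d → ℤ)} (hQ : U ⊆ Q) :
    ∑ w ∈ Q, edgeEnergy U f g i w ≤ 4 * d * dirForm d U f g := by
  have hd : (0 : ℝ) < d := by exact_mod_cast i.pos
  have hnonneg : ∀ w ∈ U, ∀ y ∈ U.filter (fun y => latAdj d w y),
      0 ≤ f w * f y / (2 * d) * (g w - g y) ^ 2 := fun w hw y hy =>
    mul_nonneg (div_nonneg (mul_nonneg (hf w hw) (hf y (Finset.mem_filter.1 hy).1))
      (by positivity)) (sq_nonneg _)
  have hedge : ∀ w ∈ U, edgeEnergy U f g i w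
      ≤ 2 * d * ∑ y ∈ U with latAdj d w y, f w * f y / (2 * d) * (g w - g y) ^ 2 := by
    intro w hw
    unfold edgeEnergy
    split_ifs with h
    · calc f w * f (w + Pi.single i 1) * (g w - g (w + Pi.single i 1)) ^ 2
          = 2 * d * (f w * f (w + Pi.single i 1) / (2 * d)
              * (g w - g (w + Pi.single i 1)) ^ 2) := by field_simp
        _ ≤ _ := by
          gcongr
          exact Finset.single_le_sum (hnonneg w hw)
            (Finset.mem_filter.2 ⟨h.2, latAdj_add_single w i⟩)
    · exact mul_nonneg (by positivity) (Finset.sum_nonneg (hnonneg w hw))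
  calc ∑ w ∈ Q, edgeEnergy U f g i w
      = ∑ w ∈ U, edgeEnergy U f g i w :=
        (Finset.sum_subset hQ fun w _ hw => by simp [edgeEnergy, hw]).symm
    _ ≤ ∑ w ∈ U, (2 * d : ℝ) * ∑ y ∈ U with latAdj d w y, f w * f y / (2 * d) * (g w - g y) ^ 2 :=
        Finset.sum_le_sum hedge
    _ = 4 * d * dirForm d U f g := by rw [← Finset.mul_sum, dirForm]; ring

end EuclideanBall

section SpectralGap

variable {d N R K : ℕ} {f : (Fin d → ℤ) → ℝ}

lemma exists_nat_mul_div_pow_le (hd : d ≠ 0) (a c : ℝ) {ε : ℝ} (hε : 0 < ε) (n : ℕ) :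
    ∃ K : ℕ, n < K ∧ c * (a / K) ^ d ≤ ε := by
  have hlim : Filter.Tendsto (fun K : ℕ => c * (a / K) ^ d) Filter.atTop (nhds 0) := by
    simpa [hd] using ((tendsto_const_div_atTop_nhds_zero_nat a).pow d).const_mul c
  exact ((Filter.eventually_gt_atTop n).and (hlim.eventually_le_const hε)).exists

lemma centrallyBounded_UNf (hN : 0 < N) (hR : 0 < R) {c₀ c₂ : ℝ} (hc₀ : 0 ≤ c₀) (hc₂ : 0 < c₂)
    (hK : 4 * d < K) (hcenter : c₂ * (4 * d / K : ℝ) ^ d ≤ 1 / 2)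
    (hsum : ∑ x ∈ UNf d N R, f x ^ 2 = 1)
    (hmono : ∀ x ∈ UNf d N R, ∀ y ∈ UNf d N R, ‖toR d x‖ ≤ ‖toR d y‖ → c₀ * f y ^ 2 ≤ f x ^ 2)
    (hupper : ∀ x ∈ UNf d N R, f x ^ 2 ≤ c₂ * (N : ℝ) ^ (-(d : ℤ))) :
    CentrallyBounded (UNf d N R) (fun x => f x ^ 2) (min c₀ (c₀ / (2 * (c₂ * (2 * R) ^ d))))
      (2 * d * (N / K)) := by
  have hNpos : (0 : ℝ) < N := by exact_mod_cast hN
  have hradius : 2 * d * (N / K) < N * R := by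
    have hquarter : 2 * (2 * d * (N / K)) ≤ N :=
      calc 2 * (2 * d * (N / K)) = 4 * d * (N / K) := by ring
        _ ≤ K * (N / K) := by gcongr
        _ ≤ N := Nat.mul_div_le N K
    exact lt_of_lt_of_le (by omega) (Nat.le_mul_of_pos_right N hR)
  have hside : 2 * (2 * d * (N / K) : ℕ) ≤ (4 * d / K * N : ℝ) :=
    calc (2 * (2 * d * (N / K) : ℕ) : ℝ) = 4 * d * (N / K : ℕ) := by push_cast; ring
      _ ≤ 4 * d * (N / K : ℝ) := by gcongr; exact Nat.cast_div_le
      _ = 4 * d / K * N := by ring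
  have hhalf : (2 * (2 * d * (N / K) : ℕ) : ℝ) ^ d * (c₂ * (N : ℝ) ^ (-(d : ℤ))) ≤ 1 / 2 :=
    calc (2 * (2 * d * (N / K) : ℕ) : ℝ) ^ d * (c₂ * (N : ℝ) ^ (-(d : ℤ)))
        ≤ (4 * d / K * N) ^ d * (c₂ * (N : ℝ) ^ (-(d : ℤ))) := by
          gcongr ?_ ^ d * _
      _ = c₂ * (4 * d / K) ^ d := by
          rw [mul_pow, zpow_neg, zpow_natCast]
          field_simp [hNpos.ne']
      _ ≤ 1 / 2 := hcenter
  exact centrallyBounded_of_almostMonotone (fun _ => mem_UNf) hradius hc₀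
    (by positivity) (fun x _ => sq_nonneg (f x)) hsum
    (fun x hx y hy hxy => hmono x hx y hy (norm_toR_le_norm_toR hxy)) (by positivity) hupper
    (by simpa only [Fintype.card_fin] using hhalf) (card_UNf_mul_le hN hc₂.le)

lemma mul_weightedVariance_le_dirForm (hd : 0 < d) (hN : 0 < N) (hR : 0 < R) (hK : 0 < K)
    {κ : ℝ} (hκ : 0 ≤ κ) (hf : ∀ x ∈ UNf d N R, 0 ≤ f x) (hsum : ∑ x ∈ UNf d N R, f x ^ 2 = 1)
    (hbound : CentrallyBounded (UNf d N R) (fun x => f x ^ 2) κ (2 * d * (N / K)))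
    (g : (Fin d → ℤ) → ℝ) :
    κ * weightedVariance (UNf d N R) (fun x => f x ^ 2) g
      ≤ 6 * R ^ 2 * (3 * R * K) ^ d * (d ^ 3 * 2 ^ d * (4 * d)) * N ^ 2
        * dirForm d (UNf d N R) f g := by
  have : Nonempty (Fin d) := ⟨⟨0, hd⟩⟩
  have hNR : (1 : ℝ) ≤ N * R := by exact_mod_cast Nat.mul_pos hN hR
  have hsmall : N / K ≤ N * R := (Nat.div_le_self N K).trans (Nat.le_mul_of_pos_right N hR)
  have henergy : ∀ i, ∑ w ∈ cube (Fin d) (N * R), edgeEnergy (UNf d N R) f g i w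
      ≤ 4 * d * dirForm d (UNf d N R) f g := fun i => sum_edgeEnergy_le hf g i UNf_subset_cube
  have hdir : 0 ≤ 4 * d * dirForm d (UNf d N R) f g :=
    (Finset.sum_nonneg fun _ _ => edgeEnergy_nonneg hf g _ _).trans (henergy ⟨0, hd⟩)
  have hcubes : ((cube (Fin d) (N * R)).card : ℝ)
      ≤ (3 * R * K) ^ d * (cube (Fin d) (N / K)).card := by
    exact_mod_cast (card_cube_mul_le (ι := Fin d) hN hR hK).trans_eq (by simp)
  have hcube_pos : (0 : ℝ) < (cube (Fin d) (N / K)).card := by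
    rw [card_cube]; positivity
  have hpaths := mul_card_mul_weightedVariance_le hf hκ UNf_subset_cube hsmall
    (by simpa only [Fintype.card_fin] using hbound) hsum henergy
  rw [Fintype.card_fin] at hpaths
  refine le_of_mul_le_mul_left ?_ hcube_pos
  calc (cube (Fin d) (N / K)).card * (κ * weightedVariance (UNf d N R) (fun x => f x ^ 2) g)
      = κ * ((cube (Fin d) (N / K)).card * weightedVariance (UNf d N R) (fun x => f x ^ 2) g) := by
        ring
    _ ≤ _ := hpaths
    _ ≤ 6 * (N * R) ^ 2 * ((3 * R * K) ^ d * (cube (Fin d) (N / K)).card)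
          * (d ^ 3 * 2 ^ d * (4 * d * dirForm d (UNf d N R) f g)) := by
        gcongr ?_ * ?_ * _
        push_cast
        nlinarith only [hNR]
    _ = _ := by ring

end SpectralGap

theorem statement5_general (d : ℕ) (hd : 0 < d) (R : ℕ) (hR : 0 < R)
    (c₀ c₂ : ℝ) (hc₀ : 0 < c₀) (hc₂ : 0 < c₂) :
    ∃ c : ℝ, 0 < c ∧ ∀ N : ℕ, 1 ≤ N → ∀ f : (Fin d → ℤ) → ℝ,
      (∀ x ∈ UNf d N R, 0 ≤ f x) →
      (∑ x ∈ UNf d N R, (f x)^2 = 1) →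
      (∀ x ∈ UNf d N R, ∀ y ∈ UNf d N R, ‖toR d x‖ ≤ ‖toR d y‖ →
        c₀ * (f y)^2 ≤ (f x)^2) →
      (∀ x ∈ UNf d N R, (f x)^2 ≤ c₂ * (N:ℝ) ^ (-(d:ℤ))) →
      ∀ g : (Fin d → ℤ) → ℝ,
        (∑ x ∈ UNf d N R, (f x)^2 * (g x)^2) - (∑ x ∈ UNf d N R, (f x)^2 * g x)^2
          ≤ c * (N:ℝ)^2 * dirForm d (UNf d N R) f g := by
  obtain ⟨K, hK, hcenter⟩ := exists_nat_mul_div_pow_le hd.ne' (4 * d) c₂ one_half_pos (4 * d)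
  have hK0 : 0 < K := Nat.zero_lt_of_lt hK
  set κ := min c₀ (c₀ / (2 * (c₂ * (2 * R) ^ d)))
  have hκ : 0 < κ := lt_min hc₀ (by positivity)
  refine ⟨6 * R ^ 2 * (3 * R * K) ^ d * (d ^ 3 * 2 ^ d * (4 * d)) / κ, by positivity, ?_⟩
  intro N hN f hf hsum hmono hupper g
  have hbound := centrallyBounded_UNf hN hR hc₀.le hc₂ hK hcenter hsum hmono hupper
  rw [div_mul_eq_mul_div, div_mul_eq_mul_div, le_div_iff₀' hκ]
  exact mul_weightedVariance_le_dirForm hd hN hR hK0 hκ.le hf hsum hbound g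

theorem statement5 (d : ℕ) (hd : 3 ≤ d) (R : ℕ) (hR : 400 < R)
    (c₀ c₁ c₂ : ℝ) (hc₀ : 0 < c₀) (hc₁ : 0 < c₁) (hc₂ : 0 < c₂) :
    ∃ c : ℝ, 0 < c ∧ ∀ N : ℕ, 1 ≤ N → ∀ f : (Fin d → ℤ) → ℝ,
      (∀ x ∈ UNf d N R, 0 < f x) →
      (∑ x ∈ UNf d N R, (f x)^2 = 1) →
      (∀ x ∈ UNf d N R, ∀ y ∈ UNf d N R, ‖toR d x‖ ≤ ‖toR d y‖ →
        c₀ * (f y)^2 ≤ (f x)^2) →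
      (∀ x ∈ UNf d N R,
        c₁ * (N:ℝ) ^ (-(d:ℤ) - 4) ≤ (f x)^2 ∧ (f x)^2 ≤ c₂ * (N:ℝ) ^ (-(d:ℤ))) →
      ∀ g : (Fin d → ℤ) → ℝ,
        (∑ x ∈ UNf d N R, (f x)^2 * (g x)^2) - (∑ x ∈ UNf d N R, (f x)^2 * g x)^2
          ≤ c * (N:ℝ)^2 * dirForm d (UNf d N R) f g := by
  obtain ⟨c, hc, hpoincare⟩ :=
    statement5_general d (by omega) R (by omega) c₀ c₂ hc₀ hc₂
  exact ⟨c, hc, fun N hN f hf hsum hmono hbd =>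
    hpoincare N hN f (fun x hx => (hf x hx).le) hsum hmono fun x hx => (hbd x hx).2⟩
end
end

section
/- Let V be a finite set and L : V × V → ℝ the generator of an irreducible reversible continuous-time Markov chain on V (that is: L_{x,y} ≥ 0 for x ≠ y, Σ_y L_{x,y} = 0 for each x, the matrix is irreducible, and there is a positive probability measure π on V with π(x)L_{x,y} = π(y)L_{y,x} for all x, y). Let E = {{x,y} : x ≠ y, L_{x,y} > 0}, and for each edge e = {x,y} ∈ E set W(e) = π(x)L_{x,y}. Suppose γ assigns to each ordered pair (x,y) of distinct points of V a finite path γ(x,y) from x to y consisting of edges of E, and set A = max_{e∈E} (1/W(e)) Σ_{(x,y) : e ∈ γ(x,y)} len(γ(x,y))·π(x)·π(y), where len denotes the number of edges of a path. Then for every g : V → ℝ one has Var_π(g) ≤ A·(−Lg, g)_{ℓ²(π)}; in particular the spectral gap λ of −L (its second smallest eigenvalue, L being self-adjoint in ℓ²(π)) satisfies λ ≥ 1/A. -/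
/-!
Canonical paths. The increment of `g` between the ends of a path is at most the sum of its
increments over the *distinct* undirected edges of the path: an edge traversed twice closes a loop
that can be cut out. Cauchy–Schwarz turns this into
`(g x - g y)² ≤ len (γ x y) · ∑ (g p - g q)²`, the sum being over these edges. Averaging over
`π × π` and exchanging the sums, every edge `e` is charged at most `A · W(e)`, while
`Var_π g = ½ ∑ π x π y (g x - g y)²` and `(-L g, g)` is the sum of `W(e) (g p - g q)²` over
undirected edges `e = {p, q}`. The factor `½` survives, so in fact
`Var_π g ≤ (A / 2) · (-L g, g)`, with equality for the symmetric chain on two points.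
-/

open scoped BigOperators Classical
open Metric Set

noncomputable section

section PathArcs

variable {V : Type*} [DecidableEq V]

/-- The undirected edges of the path through the vertices of `l`, without multiplicity. An edge is
encoded by both of its orientations, so that sums over edges are half of sums over `V × V`. -/
def pathArcs (l : List V) : Finset (V × V) :=
  (l.consecutivePairs ++ l.consecutivePairs.map Prod.swap).toFinset

lemma mem_pathArcs {l : List V} {p q : V} :
    (p, q) ∈ pathArcs l ↔ (p, q) ∈ l.consecutivePairs ∨ (q, p) ∈ l.consecutivePairs := by
  rw [pathArcs, List.mem_toFinset, List.mem_append, List.mem_map_swap]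

lemma left_mem_of_mem_pathArcs {l : List V} {p q : V} (h : (p, q) ∈ pathArcs l) : p ∈ l := by
  rcases mem_pathArcs.1 h with h | h
  · exact (List.of_mem_zip h).1
  · exact List.mem_of_mem_tail (List.of_mem_zip h).2

lemma right_mem_of_mem_pathArcs {l : List V} {p q : V} (h : (p, q) ∈ pathArcs l) : q ∈ l :=
  left_mem_of_mem_pathArcs (mem_pathArcs.2 (mem_pathArcs.1 h).symm)

lemma pathArcs_cons_cons (a b : V) (t : List V) :
    pathArcs (a :: b :: t) = insert (a, b) (insert (b, a) (pathArcs (b :: t))) := by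
  ext ⟨p, q⟩
  simp only [mem_pathArcs, Finset.mem_insert, List.consecutivePairs, List.tail_cons,
    List.zip_cons_cons, List.mem_cons, Prod.mk.injEq]
  tauto

lemma card_pathArcs_le (l : List V) : (pathArcs l).card ≤ 2 * (l.length - 1) := by
  refine (List.toFinset_card_le _).trans_eq ?_
  simp only [List.length_append, List.length_map, List.length_zip, List.length_tail]
  omega

lemma rel_of_mem_pathArcs {R : V → V → Prop} {l : List V} (hl : l.IsChain R) {p q : V}
    (h : (p, q) ∈ pathArcs l) : R p q ∨ R q p := by
  have rel {a b : V} (hab : (a, b) ∈ l.consecutivePairs) : R a b := by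
    obtain ⟨i, hi, hi_eq⟩ := List.mem_iff_getElem.1 hab
    simp only [List.getElem_zip, List.getElem_tail, Prod.mk.injEq] at hi_eq
    obtain ⟨rfl, rfl⟩ := hi_eq
    exact hl.getElem i _
  exact (mem_pathArcs.1 h).imp rel rel

variable {X : Type*} [PseudoMetricSpace X]

lemma two_mul_dist_le_sum_pathArcs (g : V → X) {l : List V} {z w : V} (hz : z ∈ l) (hw : w ∈ l) :
    2 * dist (g z) (g w) ≤ ∑ e ∈ pathArcs l, dist (g e.1) (g e.2) := by
  induction l generalizing z w with
  | nil => simp at hz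
  | cons a t ih =>
    by_cases ha : a ∈ t
    · -- `a` is visited again, so the first step is not needed to reach any vertex
      obtain ⟨b, t, rfl⟩ := List.exists_cons_of_ne_nil (List.ne_nil_of_mem ha)
      have mem_tail {v : V} (hv : v ∈ a :: b :: t) : v ∈ b :: t :=
        (List.mem_cons.1 hv).elim (fun h => h ▸ ha) id
      refine (ih (mem_tail hz) (mem_tail hw)).trans
        (Finset.sum_le_sum_of_subset_of_nonneg ?_ fun _ _ _ => dist_nonneg)
      rw [pathArcs_cons_cons]
      exact (Finset.subset_insert _ _).trans (Finset.subset_insert _ _)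
    · obtain _ | ⟨b, t⟩ := t
      · rw [List.mem_singleton.1 hz, List.mem_singleton.1 hw, dist_self, mul_zero]
        exact Finset.sum_nonneg fun _ _ => dist_nonneg
      have hb : b ∈ b :: t := List.mem_cons_self
      have hab : (a, b) ∉ insert (b, a) (pathArcs (b :: t)) := by
        rw [Finset.mem_insert, Prod.mk.injEq]
        rintro (⟨rfl, -⟩ | h)
        exacts [ha hb, ha (left_mem_of_mem_pathArcs h)]
      have hba : (b, a) ∉ pathArcs (b :: t) := fun h => ha (right_mem_of_mem_pathArcs h)
      rw [pathArcs_cons_cons, Finset.sum_insert hab, Finset.sum_insert hba, dist_comm (g b) (g a)]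
      have from_head {v : V} (hv : v ∈ b :: t) : 2 * dist (g a) (g v) ≤ dist (g a) (g b) +
          (dist (g a) (g b) + ∑ e ∈ pathArcs (b :: t), dist (g e.1) (g e.2)) := by
        linarith [dist_triangle (g a) (g b) (g v), ih hb hv]
      rcases List.mem_cons.1 hz with rfl | hz' <;> rcases List.mem_cons.1 hw with rfl | hw'
      · rw [dist_self, mul_zero]
        positivity
      · exact from_head hw'
      · rw [dist_comm (g z)]
        exact from_head hz'
      · linarith [ih hz' hw', dist_nonneg (x := g a) (y := g b)]

lemma two_mul_dist_sq_le_length_mul_sum_pathArcs (g : V → X) {l : List V} {z w : V} (hz : z ∈ l)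
    (hw : w ∈ l) :
    2 * dist (g z) (g w) ^ 2 ≤
      ((l.length : ℝ) - 1) * ∑ e ∈ pathArcs l, dist (g e.1) (g e.2) ^ 2 := by
  have hcard : ((pathArcs l).card : ℝ) ≤ 2 * ((l.length : ℝ) - 1) := by
    have h := card_pathArcs_le l
    rw [← Nat.cast_pred (List.length_pos_of_mem hz)]
    exact_mod_cast h
  have hsq : (2 * dist (g z) (g w)) ^ 2 ≤
      2 * ((l.length : ℝ) - 1) * ∑ e ∈ pathArcs l, dist (g e.1) (g e.2) ^ 2 :=
    calc (2 * dist (g z) (g w)) ^ 2 ≤ (∑ e ∈ pathArcs l, dist (g e.1) (g e.2)) ^ 2 := by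
          gcongr
          exact two_mul_dist_le_sum_pathArcs g hz hw
      _ ≤ (pathArcs l).card * ∑ e ∈ pathArcs l, dist (g e.1) (g e.2) ^ 2 :=
          sq_sum_le_card_mul_sum_sq
      _ ≤ _ := by gcongr
  linarith

end PathArcs

section Congestion

variable {V : Type*} [Fintype V] [DecidableEq V]

/-- The load that the paths `γ` put on the edge `{p, q}` when `γ x y` carries the mass `m x y`:
the sum of `len (γ x y) * m x y` over the pairs `x ≠ y` whose path uses `{p, q}`. Paths are lists of
vertices, so `len` is the length of the list minus one. -/
def pathLoad (m : V → V → ℝ) (γ : V → V → List V) (p q : V) : ℝ :=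
  ∑ xy : V × V, if xy.1 ≠ xy.2 ∧ (p, q) ∈ pathArcs (γ xy.1 xy.2)
    then ((γ xy.1 xy.2).length - 1 : ℝ) * m xy.1 xy.2 else 0

/-- The congestion constant `A` of the paths `γ`: the largest ratio of load to conductance over the
edges of the network with conductances `c`, and `0` if there are no edges. -/
def congestion (c m : V → V → ℝ) (γ : V → V → List V) : ℝ :=
  sSup {a : ℝ | ∃ p q : V, p ≠ q ∧ 0 < c p q ∧ a = 1 / c p q * pathLoad m γ p q}

lemma sum_pathLoad_mul (m : V → V → ℝ) (γ : V → V → List V) (f : V × V → ℝ) :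
    ∑ e : V × V, pathLoad m γ e.1 e.2 * f e = ∑ xy : V × V, if xy.1 ≠ xy.2
      then ((γ xy.1 xy.2).length - 1 : ℝ) * m xy.1 xy.2 * ∑ e ∈ pathArcs (γ xy.1 xy.2), f e
      else 0 := by
  simp only [pathLoad, Finset.sum_mul]
  rw [Finset.sum_comm]
  refine Finset.sum_congr rfl fun xy _ => ?_
  split_ifs with hxy
  · simp [hxy, Finset.mul_sum]
  · simp [hxy]

variable {c m : V → V → ℝ} {γ : V → V → List V}

lemma pathLoad_eq_zero (hc : ∀ x y, c x y = c y x)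
    (hγ : ∀ x y, x ≠ y → (γ x y).IsChain fun a b => 0 < c a b) {p q : V} (hpq : c p q = 0) :
    pathLoad m γ p q = 0 := by
  refine Finset.sum_eq_zero fun xy _ => if_neg ?_
  rintro ⟨hne, hmem⟩
  rcases rel_of_mem_pathArcs (hγ _ _ hne) hmem with h | h
  · exact h.ne' hpq
  · exact h.ne' ((hc q p).trans hpq)

lemma pathLoad_le_congestion_mul (hc : ∀ x y, c x y = c y x) (hc_nonneg : ∀ x y, x ≠ y → 0 ≤ c x y)
    (hγ : ∀ x y, x ≠ y → (γ x y).IsChain fun a b => 0 < c a b) {p q : V} (hpq : p ≠ q) :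
    pathLoad m γ p q ≤ congestion c m γ * c p q := by
  rcases (hc_nonneg p q hpq).eq_or_lt with hzero | hpos
  · rw [pathLoad_eq_zero hc hγ hzero.symm, ← hzero, mul_zero]
  · have hbdd : BddAbove {a : ℝ | ∃ p q : V, p ≠ q ∧ 0 < c p q ∧
        a = 1 / c p q * pathLoad m γ p q} := by
      refine ((Set.finite_range fun e : V × V => 1 / c e.1 e.2 * pathLoad m γ e.1 e.2).subset
        ?_).bddAbove
      rintro a ⟨p, q, -, -, rfl⟩
      exact ⟨(p, q), rfl⟩
    have hle : 1 / c p q * pathLoad m γ p q ≤ congestion c m γ :=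
      le_csSup hbdd ⟨p, q, hpq, hpos, rfl⟩
    rwa [one_div_mul_eq_div, div_le_iff₀ hpos] at hle

variable {X : Type*} [PseudoMetricSpace X]

theorem two_mul_sum_mul_dist_sq_le_of_pathLoad_le (hm : ∀ x y, 0 ≤ m x y)
    (hγ : ∀ x y, x ≠ y → x ∈ γ x y ∧ y ∈ γ x y) {A : ℝ}
    (hA : ∀ p q, p ≠ q → pathLoad m γ p q ≤ A * c p q) (g : V → X) :
    2 * ∑ x, ∑ y, m x y * dist (g x) (g y) ^ 2 ≤ A * ∑ p, ∑ q, c p q * dist (g p) (g q) ^ 2 := by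
  simp only [← Fintype.sum_prod_type', Finset.mul_sum]
  calc ∑ xy : V × V, 2 * (m xy.1 xy.2 * dist (g xy.1) (g xy.2) ^ 2)
      ≤ ∑ xy : V × V, if xy.1 ≠ xy.2
          then ((γ xy.1 xy.2).length - 1 : ℝ) * m xy.1 xy.2 *
            ∑ e ∈ pathArcs (γ xy.1 xy.2), dist (g e.1) (g e.2) ^ 2
          else 0 := by
        refine Finset.sum_le_sum fun ⟨x, y⟩ _ => ?_
        split_ifs with hxy
        · obtain ⟨hx, hy⟩ := hγ x y hxy
          linarith [mul_le_mul_of_nonneg_left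
            (two_mul_dist_sq_le_length_mul_sum_pathArcs g hx hy) (hm x y)]
        · obtain rfl : x = y := not_not.1 hxy
          simp
    _ = ∑ e : V × V, pathLoad m γ e.1 e.2 * dist (g e.1) (g e.2) ^ 2 :=
        (sum_pathLoad_mul m γ _).symm
    _ ≤ ∑ e : V × V, A * (c e.1 e.2 * dist (g e.1) (g e.2) ^ 2) := by
        refine Finset.sum_le_sum fun ⟨p, q⟩ _ => ?_
        rcases eq_or_ne p q with rfl | hpq
        · simp
        · rw [← mul_assoc]
          gcongr
          exact hA p q hpq

end Congestion

section ReversibleChain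

variable {V : Type*} [Fintype V] {L : V → V → ℝ} {π : V → ℝ}

lemma variance_eq_half_sum_sq_sub (hπsum : ∑ x, π x = 1) (g : V → ℝ) :
    (∑ x, π x * g x ^ 2) - (∑ x, π x * g x) ^ 2 =
      1 / 2 * ∑ x, ∑ y, π x * π y * (g x - g y) ^ 2 := by
  have expand (x y : V) : π x * π y * (g x - g y) ^ 2 =
      π x * g x ^ 2 * π y - 2 * ((π x * g x) * (π y * g y)) + π x * (π y * g y ^ 2) := by ring
  simp only [expand, Finset.sum_add_distrib, Finset.sum_sub_distrib, ← Finset.mul_sum,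
    ← Finset.sum_mul, hπsum]
  ring

lemma variance_nonneg (hπ : ∀ x, 0 ≤ π x) (hπsum : ∑ x, π x = 1) (g : V → ℝ) :
    0 ≤ (∑ x, π x * g x ^ 2) - (∑ x, π x * g x) ^ 2 := by
  rw [variance_eq_half_sum_sq_sub hπsum]
  exact mul_nonneg one_half_pos.le (Finset.sum_nonneg fun x _ => Finset.sum_nonneg fun y _ =>
    mul_nonneg (mul_nonneg (hπ x) (hπ y)) (sq_nonneg _))

lemma dirichletForm_eq_half_sum_sq_sub (hrow : ∀ x, ∑ y, L x y = 0)
    (hrev : ∀ x y, π x * L x y = π y * L y x) (g : V → ℝ) :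
    ∑ x, π x * (-(∑ y, L x y * g y)) * g x =
      1 / 2 * ∑ x, ∑ y, π x * L x y * (g x - g y) ^ 2 := by
  have expand (x y : V) : π x * L x y * (g x - g y) ^ 2 =
      π x * g x ^ 2 * L x y + 2 * (π x * (-(L x y * g y)) * g x) + π y * g y ^ 2 * L y x := by
    linear_combination g y ^ 2 * hrev x y
  have hcol : ∑ x, ∑ y, π y * g y ^ 2 * L y x = 0 := by
    rw [Finset.sum_comm]
    simp only [← Finset.mul_sum, hrow, mul_zero, Finset.sum_const_zero]
  simp only [expand, Finset.sum_add_distrib, hcol, ← Finset.mul_sum, ← Finset.sum_mul, hrow,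
    Finset.sum_neg_distrib, mul_zero, Finset.sum_const_zero]
  ring

theorem statement6_general [DecidableEq V] (hoff : ∀ x y, x ≠ y → 0 ≤ L x y)
    (hrow : ∀ x, ∑ y, L x y = 0) (hπpos : ∀ x, 0 < π x) (hπsum : ∑ x, π x = 1)
    (hrev : ∀ x y, π x * L x y = π y * L y x) {γ : V → V → List V}
    (hγ : ∀ x y, x ≠ y → (γ x y).head? = some x ∧ (γ x y).getLast? = some y ∧
      (γ x y).IsChain fun a b => 0 < L a b) (g : V → ℝ) :
    (∑ x, π x * g x ^ 2) - (∑ x, π x * g x) ^ 2 ≤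
      congestion (fun x y => π x * L x y) (fun x y => π x * π y) γ / 2 *
        ∑ x, π x * (-(∑ y, L x y * g y)) * g x := by
  have hends (x y : V) (hxy : x ≠ y) : x ∈ γ x y ∧ y ∈ γ x y :=
    ⟨List.mem_of_head? (hγ x y hxy).1, List.mem_of_getLast? (hγ x y hxy).2.1⟩
  have hchain (x y : V) (hxy : x ≠ y) : (γ x y).IsChain fun a b => 0 < π a * L a b :=
    (hγ x y hxy).2.2.imp fun a _ => mul_pos (hπpos a)
  have hcomparison := two_mul_sum_mul_dist_sq_le_of_pathLoad_le
    (fun x y => (mul_pos (hπpos x) (hπpos y)).le) hends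
    (fun _ _ => pathLoad_le_congestion_mul hrev
      (fun x y hxy => mul_nonneg (hπpos x).le (hoff x y hxy)) hchain) g
  simp only [Real.dist_eq, sq_abs] at hcomparison
  rw [variance_eq_half_sum_sq_sub hπsum, dirichletForm_eq_half_sum_sq_sub hrow hrev]
  linarith

end ReversibleChain

theorem statement6 (V : Type*) [Fintype V] [DecidableEq V]
    (L : V → V → ℝ) (π : V → ℝ)
    (hoff : ∀ x y, x ≠ y → 0 ≤ L x y)
    (hrow : ∀ x, ∑ y, L x y = 0)
    (hπpos : ∀ x, 0 < π x) (hπsum : ∑ x, π x = 1)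
    (hrev : ∀ x y, π x * L x y = π y * L y x)
    (γ : V → V → List V)
    (hγ : ∀ x y, x ≠ y → (γ x y).head? = some x ∧ (γ x y).getLast? = some y ∧
      (γ x y).Chain' (fun a b => a ≠ b ∧ 0 < L a b)) :
    ∀ g : V → ℝ,
      (∑ x, π x * (g x)^2) - (∑ x, π x * g x)^2 ≤
        sSup { a : ℝ | ∃ p q : V, p ≠ q ∧ 0 < L p q ∧
          a = (1/(π p * L p q)) *
            ∑ xy : V × V,
              (if xy.1 ≠ xy.2 ∧
                  ((p, q) ∈ (γ xy.1 xy.2).zip (γ xy.1 xy.2).tail ∨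
                   (q, p) ∈ (γ xy.1 xy.2).zip (γ xy.1 xy.2).tail)
                then ((γ xy.1 xy.2).length - 1 : ℝ) * π xy.1 * π xy.2 else 0) } *
        (∑ x, π x * (-(∑ y, L x y * g y)) * g x) := by
  intro g
  have hhalf := statement6_general hoff hrow hπpos hπsum hrev (fun x y hxy =>
    (hγ x y hxy).imp_right <| And.imp_right <| List.IsChain.imp fun _ _ => And.right) g
  have hvar := variance_nonneg (fun x => (hπpos x).le) hπsum g
  simp only [congestion, pathLoad, mem_pathArcs, mul_pos_iff_of_pos_left (hπpos _), ← mul_assoc]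
    at hhalf
  linarith
end
end

section
/- In the setting of the confined walk and the concentric boxes around x₀ ∈ Γ^N, one has, for N large enough that all objects are defined: Ē(g,g)·(1 − 2·sup_{x∈D}|f_{A₁}(x)|) ≤ 1/Ē_π[H_{A₁}] ≤ Ē(g,g)/π(D)², where D = U^N ∖ A₂ and π(D) = Σ_{x∈D} π(x). -/
/-!
Write `m = ∑ π u` for the mean entrance time of `A₁`, `𝓔` for the Dirichlet form, `D = U ∖ A₂`.
Three pairings are computed with Green's formula `𝓔(v, k) = -∑ π k L̃v`.

* As `u` vanishes on `A₁` and `L̃u = -1` off `A₁`, `𝓔(u, u) = m`.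
* As `1 - g` vanishes on `A₁`, `-𝓔(u, g) = 𝓔(u, 1 - g) = ∑ π (1 - g)`, which lies between `π(D)`
  and `1` if `0 ≤ g ≤ 1`. Cauchy–Schwarz then gives `π(D)² ≤ m 𝓔(g, g)`, the upper bound.
* As `L̃g = 0` on `A₂ ∖ A₁`, `-𝓔(g, u) = ∑_D π u L̃g`, where `L̃g ≥ 0` on `D` and
  `∑_D π L̃g = 𝓔(g, g)`. With `u ≥ m (1 - s)` on `D`, `s = sup_D |1 - u / m|`, this yields
  `m (1 - s) 𝓔(g, g) ≤ 1`, which improves the factor `1 - 2s` of the lower bound.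

That `0 ≤ g ≤ 1` may be assumed follows from the Dirichlet principle: truncating `g` to `[0, 1]`
keeps its boundary values and does not increase the energy, hence leaves `L̃g` and `𝓔(g, g)`
unchanged.
-/

open scoped BigOperators Classical
open Metric Set

noncomputable section

section Network

variable {α : Type*} {U : Finset α} {c : α → α → ℝ}

/-- A symmetric nonnegative weight on the pairs of points of `U`: the conductances of a finite
network, whose edges are the pairs of positive weight. -/
structure IsConductance (U : Finset α) (c : α → α → ℝ) : Prop where
  symm : ∀ x ∈ U, ∀ y ∈ U, c x y = c y x
  nonneg : ∀ x ∈ U, ∀ y ∈ U, 0 ≤ c x y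

/-- The Laplacian of a network, not normalised by the reversible measure: for the confined walk
it is `π(x) (L̃v)(x)`. -/
def networkLaplacian (U : Finset α) (c : α → α → ℝ) (v : α → ℝ) (x : α) : ℝ :=
  ∑ y ∈ U, c x y * (v y - v x)

/-- The Dirichlet form of a network, with the factor `1/2` because every edge is counted twice. -/
def dirichletForm (U : Finset α) (c : α → α → ℝ) : LinearMap.BilinForm ℝ (α → ℝ) :=
  LinearMap.mk₂ ℝ (fun v k => 1 / 2 * ∑ x ∈ U, ∑ y ∈ U, c x y * ((v x - v y) * (k x - k y)))
    (fun v₁ v₂ k => by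
      simp only [Pi.add_apply, ← mul_add, ← Finset.sum_add_distrib]
      congr! 3; ring)
    (fun a v k => by
      simp only [Pi.smul_apply, smul_eq_mul, Finset.mul_sum]
      congr! 2; ring)
    (fun v k₁ k₂ => by
      simp only [Pi.add_apply, ← mul_add, ← Finset.sum_add_distrib]
      congr! 3; ring)
    (fun a v k => by
      simp only [Pi.smul_apply, smul_eq_mul, Finset.mul_sum]
      congr! 2; ring)

lemma dirichletForm_apply (v k : α → ℝ) : dirichletForm U c v k =
    1 / 2 * ∑ x ∈ U, ∑ y ∈ U, c x y * ((v x - v y) * (k x - k y)) :=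
  rfl

lemma dirichletForm_comm (v k : α → ℝ) : dirichletForm U c v k = dirichletForm U c k v := by
  simp only [dirichletForm_apply, mul_comm (v _ - v _)]

@[simp]
lemma dirichletForm_one_right (v : α → ℝ) : dirichletForm U c v 1 = 0 := by
  simp [dirichletForm_apply]

namespace IsConductance

lemma dirichletForm_self_nonneg (hc : IsConductance U c) (v : α → ℝ) :
    0 ≤ dirichletForm U c v v :=
  mul_nonneg one_half_pos.le <| Finset.sum_nonneg fun x hx => Finset.sum_nonneg fun y hy =>
    mul_nonneg (hc.nonneg x hx y hy) (mul_self_nonneg _)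

lemma dirichletForm_sq_le (hc : IsConductance U c) (v k : α → ℝ) :
    dirichletForm U c v k ^ 2 ≤ dirichletForm U c v v * dirichletForm U c k k :=
  (dirichletForm U c).apply_sq_le_of_symm hc.dirichletForm_self_nonneg ⟨dirichletForm_comm⟩ v k

lemma dirichletForm_eq_neg_sum (hc : IsConductance U c) (v k : α → ℝ) :
    dirichletForm U c v k = -∑ x ∈ U, k x * networkLaplacian U c v x := by
  have left : ∑ x ∈ U, k x * networkLaplacian U c v x
      = ∑ x ∈ U, ∑ y ∈ U, c x y * (v y - v x) * k x := by
    simp only [networkLaplacian, mul_comm (k _), Finset.sum_mul]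
  have right : ∑ x ∈ U, k x * networkLaplacian U c v x
      = ∑ x ∈ U, ∑ y ∈ U, c x y * (v x - v y) * k y := by
    rw [left, Finset.sum_comm]
    exact Finset.sum_congr rfl fun x hx => Finset.sum_congr rfl fun y hy => by
      rw [hc.symm x hx y hy]
  have split : ∑ x ∈ U, ∑ y ∈ U, c x y * ((v x - v y) * (k x - k y))
      = -(∑ x ∈ U, ∑ y ∈ U, c x y * (v y - v x) * k x)
        - ∑ x ∈ U, ∑ y ∈ U, c x y * (v x - v y) * k y := by
    simp only [← Finset.sum_neg_distrib, ← Finset.sum_sub_distrib]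
    congr! 2; ring
  rw [dirichletForm_apply, split, ← left, ← right]
  ring

lemma networkLaplacian_eq_zero_of_dirichletForm_self_eq_zero (hc : IsConductance U c)
    {v : α → ℝ} (hv : dirichletForm U c v v = 0) {x : α} (hx : x ∈ U) :
    networkLaplacian U c v x = 0 := by
  classical
  have orthogonal : dirichletForm U c v (Pi.single x 1) = 0 := by
    have := hc.dirichletForm_sq_le v (Pi.single x 1)
    rw [hv, zero_mul] at this
    exact pow_eq_zero_iff two_ne_zero |>.1 (this.antisymm (sq_nonneg _))
  simpa [hc.dirichletForm_eq_neg_sum, Pi.single_apply, hx] using orthogonal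

lemma dirichletForm_comp_le (hc : IsConductance U c) {φ : ℝ → ℝ} (hφ : LipschitzWith 1 φ)
    (v : α → ℝ) : dirichletForm U c (φ ∘ v) (φ ∘ v) ≤ dirichletForm U c v v := by
  simp only [dirichletForm_apply, Function.comp_apply, ← pow_two]
  refine mul_le_mul_of_nonneg_left (Finset.sum_le_sum fun x hx => Finset.sum_le_sum fun y hy =>
    mul_le_mul_of_nonneg_left (sq_le_sq.2 ?_) (hc.nonneg x hx y hy)) one_half_pos.le
  simpa [Real.dist_eq] using hφ.dist_le_mul (v x) (v y)

end IsConductance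

/-- The competitors in the variational problem for the capacity of `A₁` relative to `A₂`. -/
structure IsTestFunction (U A₁ A₂ : Finset α) (w : α → ℝ) : Prop where
  eq_one : ∀ x ∈ A₁, w x = 1
  eq_zero : ∀ x ∈ U, x ∉ A₂ → w x = 0

lemma IsTestFunction.comp {A₁ A₂ : Finset α} {w : α → ℝ} (hw : IsTestFunction U A₁ A₂ w)
    {φ : ℝ → ℝ} (h₀ : φ 0 = 0) (h₁ : φ 1 = 1) : IsTestFunction U A₁ A₂ (φ ∘ w) where
  eq_one x hx := by simp [hw.eq_one x hx, h₁]
  eq_zero x hx hx₂ := by simp [hw.eq_zero x hx hx₂, h₀]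

/-- An equilibrium potential of `A₁` relative to `A₂` in the network `(U, c)`. Connectedness is not
assumed, so there can be several. -/
structure IsEquilibriumPotential (U A₁ A₂ : Finset α) (c : α → α → ℝ) (g : α → ℝ) : Prop
    extends IsTestFunction U A₁ A₂ g where
  networkLaplacian_eq_zero : ∀ x ∈ U, x ∈ A₂ → x ∉ A₁ → networkLaplacian U c g x = 0

/-- `u` is the mean entrance time of `A` for the walk with conductances `c` and speed measure `π`,
that is, it vanishes on `A` and has generator `-1` off `A`. -/
structure IsMeanEntranceTime (U A : Finset α) (c : α → α → ℝ) (π u : α → ℝ) : Prop where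
  eq_zero : ∀ x ∈ A, u x = 0
  networkLaplacian_eq : ∀ x ∈ U, x ∉ A → networkLaplacian U c u x = -π x

variable {A₁ A₂ : Finset α} {π g u w : α → ℝ}

namespace IsMeanEntranceTime

lemma dirichletForm_eq_sum (hc : IsConductance U c) (hu : IsMeanEntranceTime U A₁ c π u)
    {k : α → ℝ} (hk : ∀ x ∈ A₁, k x = 0) : dirichletForm U c u k = ∑ x ∈ U, π x * k x := by
  rw [hc.dirichletForm_eq_neg_sum, ← Finset.sum_neg_distrib]
  refine Finset.sum_congr rfl fun x hx => ?_
  by_cases hx₁ : x ∈ A₁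
  · simp [hk x hx₁]
  · rw [hu.networkLaplacian_eq x hx hx₁]; ring

lemma neg_dirichletForm_eq_sum (hc : IsConductance U c) (hu : IsMeanEntranceTime U A₁ c π u)
    (hw : ∀ x ∈ A₁, w x = 1) : -dirichletForm U c u w = ∑ x ∈ U, π x * (1 - w x) := by
  simpa using hu.dirichletForm_eq_sum hc (k := 1 - w) fun x hx => by simp [hw x hx]

end IsMeanEntranceTime

namespace IsEquilibriumPotential

lemma dirichletForm_eq_zero (hc : IsConductance U c) (hg : IsEquilibriumPotential U A₁ A₂ c g)
    {k : α → ℝ} (hk₁ : ∀ x ∈ A₁, k x = 0) (hk₂ : ∀ x ∈ U, x ∉ A₂ → k x = 0) :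
    dirichletForm U c g k = 0 := by
  rw [hc.dirichletForm_eq_neg_sum, neg_eq_zero]
  refine Finset.sum_eq_zero fun x hx => ?_
  by_cases hx₁ : x ∈ A₁
  · rw [hk₁ x hx₁, zero_mul]
  by_cases hx₂ : x ∈ A₂
  · rw [hg.networkLaplacian_eq_zero x hx hx₂ hx₁, mul_zero]
  · rw [hk₂ x hx hx₂, zero_mul]

lemma dirichletForm_self_add (hc : IsConductance U c)
    (hg : IsEquilibriumPotential U A₁ A₂ c g) (hw : IsTestFunction U A₁ A₂ w) :
    dirichletForm U c g g + dirichletForm U c (w - g) (w - g) = dirichletForm U c w w := by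
  have orthogonal := hg.dirichletForm_eq_zero hc (k := w - g)
    (fun x hx => by simp [hw.eq_one x hx, hg.eq_one x hx])
    (fun x hx hx₂ => by simp [hw.eq_zero x hx hx₂, hg.eq_zero x hx hx₂])
  have symm := dirichletForm_comm (U := U) (c := c) w g
  simp only [map_sub, LinearMap.sub_apply] at orthogonal ⊢
  linarith

lemma of_dirichletForm_self_le (hc : IsConductance U c)
    (hg : IsEquilibriumPotential U A₁ A₂ c g) (hw : IsTestFunction U A₁ A₂ w)
    (hle : dirichletForm U c w w ≤ dirichletForm U c g g) :
    IsEquilibriumPotential U A₁ A₂ c w ∧ dirichletForm U c w w = dirichletForm U c g g := by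
  have pythagoras := hg.dirichletForm_self_add hc hw
  have difference_null : dirichletForm U c (w - g) (w - g) = 0 :=
    le_antisymm (by linarith) (hc.dirichletForm_self_nonneg _)
  refine ⟨⟨hw, fun x hx hx₂ hx₁ => ?_⟩, by linarith⟩
  have := hc.networkLaplacian_eq_zero_of_dirichletForm_self_eq_zero difference_null hx
  rw [← hg.networkLaplacian_eq_zero x hx hx₂ hx₁, ← sub_eq_zero, ← this]
  simp only [networkLaplacian, ← Finset.sum_sub_distrib, Pi.sub_apply]
  congr! 1; ring

/-- In place of the maximum principle, which needs connectedness: truncation to `[0, 1]` does not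
increase the energy, so it maps an equilibrium potential to another one. -/
lemma exists_mem_Icc (hc : IsConductance U c) (hg : IsEquilibriumPotential U A₁ A₂ c g) :
    ∃ w, IsEquilibriumPotential U A₁ A₂ c w ∧ (∀ x, w x ∈ Set.Icc (0 : ℝ) 1) ∧
      dirichletForm U c w w = dirichletForm U c g g := by
  have contraction : LipschitzWith 1 fun t : ℝ => max 0 (min 1 t) :=
    (LipschitzWith.id.const_min 1).const_max 0
  obtain ⟨potential, energy⟩ := hg.of_dirichletForm_self_le hc
    (hg.toIsTestFunction.comp (by simp) (by simp)) (hc.dirichletForm_comp_le contraction g)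
  exact ⟨_, potential, fun x => ⟨le_max_left _ _, max_le zero_le_one (min_le_left _ _)⟩, energy⟩

end IsEquilibriumPotential

variable [DecidableEq α]

lemma IsMeanEntranceTime.sq_sum_sdiff_le (hc : IsConductance U c)
    (hπ : ∀ x ∈ U, 0 ≤ π x) (hu : IsMeanEntranceTime U A₁ c π u)
    (hw : IsTestFunction U A₁ A₂ w) (hw_le : ∀ x ∈ U, w x ≤ 1) :
    (∑ x ∈ U \ A₂, π x) ^ 2 ≤ (∑ x ∈ U, π x * u x) * dirichletForm U c w w := by
  have mass_le : ∑ x ∈ U \ A₂, π x ≤ -dirichletForm U c u w := by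
    rw [hu.neg_dirichletForm_eq_sum hc hw.eq_one]
    calc ∑ x ∈ U \ A₂, π x = ∑ x ∈ U \ A₂, π x * (1 - w x) :=
          Finset.sum_congr rfl fun x hx => by
            rw [hw.eq_zero x (Finset.mem_sdiff.1 hx).1 (Finset.mem_sdiff.1 hx).2]; ring
      _ ≤ ∑ x ∈ U, π x * (1 - w x) :=
          Finset.sum_le_sum_of_subset_of_nonneg Finset.sdiff_subset fun x hx _ =>
            mul_nonneg (hπ x hx) (sub_nonneg.2 (hw_le x hx))
  have mass_nonneg : 0 ≤ ∑ x ∈ U \ A₂, π x :=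
    Finset.sum_nonneg fun x hx => hπ x (Finset.mem_sdiff.1 hx).1
  calc (∑ x ∈ U \ A₂, π x) ^ 2 ≤ (-dirichletForm U c u w) ^ 2 := by gcongr
    _ = dirichletForm U c u w ^ 2 := neg_sq _
    _ ≤ dirichletForm U c u u * dirichletForm U c w w := hc.dirichletForm_sq_le u w
    _ = (∑ x ∈ U, π x * u x) * dirichletForm U c w w := by
        rw [hu.dirichletForm_eq_sum hc hu.eq_zero]

namespace IsEquilibriumPotential

lemma dirichletForm_eq_neg_sum_sdiff (hc : IsConductance U c)
    (hg : IsEquilibriumPotential U A₁ A₂ c g) {k : α → ℝ} (hk : ∀ x ∈ A₁, k x = 0) :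
    dirichletForm U c g k = -∑ x ∈ U \ A₂, k x * networkLaplacian U c g x := by
  rw [hc.dirichletForm_eq_neg_sum, neg_inj, eq_comm]
  refine Finset.sum_subset Finset.sdiff_subset fun x hx hxD => ?_
  have hx₂ : x ∈ A₂ := by simpa [hx] using hxD
  by_cases hx₁ : x ∈ A₁
  · rw [hk x hx₁, zero_mul]
  · rw [hg.networkLaplacian_eq_zero x hx hx₂ hx₁, mul_zero]

/-- The energy is the flux out of `A₂`: testing against `g - 1` instead of `g` moves the mass of
the Laplacian of `g` from `A₁` to `U \ A₂`. -/
lemma dirichletForm_self_eq_sum_sdiff (hc : IsConductance U c)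
    (hg : IsEquilibriumPotential U A₁ A₂ c g) :
    dirichletForm U c g g = ∑ x ∈ U \ A₂, networkLaplacian U c g x := by
  have shifted := hg.dirichletForm_eq_neg_sum_sdiff hc (k := g - 1) fun x hx => by
    simp [hg.eq_one x hx]
  rw [map_sub, dirichletForm_one_right, sub_zero] at shifted
  rw [shifted, ← Finset.sum_neg_distrib]
  refine Finset.sum_congr rfl fun x hx => ?_
  simp [hg.eq_zero x (Finset.mem_sdiff.1 hx).1 (Finset.mem_sdiff.1 hx).2]

lemma mul_dirichletForm_self_le (hc : IsConductance U c) (hπ : ∀ x ∈ U, 0 ≤ π x)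
    (hg : IsEquilibriumPotential U A₁ A₂ c g) (hg_nonneg : ∀ x ∈ U, 0 ≤ g x)
    (hu : IsMeanEntranceTime U A₁ c π u) {b : ℝ} (hb : ∀ x ∈ U \ A₂, b ≤ u x) :
    b * dirichletForm U c g g ≤ ∑ x ∈ U, π x := by
  have flux_nonneg : ∀ x ∈ U \ A₂, 0 ≤ networkLaplacian U c g x := fun x hx => by
    rw [Finset.mem_sdiff] at hx
    refine Finset.sum_nonneg fun y hy => mul_nonneg (hc.nonneg x hx.1 y hy) ?_
    rw [hg.eq_zero x hx.1 hx.2, sub_zero]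
    exact hg_nonneg y hy
  calc b * dirichletForm U c g g = ∑ x ∈ U \ A₂, b * networkLaplacian U c g x := by
        rw [hg.dirichletForm_self_eq_sum_sdiff hc, Finset.mul_sum]
    _ ≤ ∑ x ∈ U \ A₂, u x * networkLaplacian U c g x :=
        Finset.sum_le_sum fun x hx => mul_le_mul_of_nonneg_right (hb x hx) (flux_nonneg x hx)
    _ = -dirichletForm U c u g := by
        rw [dirichletForm_comm, hg.dirichletForm_eq_neg_sum_sdiff hc hu.eq_zero, neg_neg]
    _ = ∑ x ∈ U, π x * (1 - g x) := hu.neg_dirichletForm_eq_sum hc hg.eq_one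
    _ ≤ ∑ x ∈ U, π x := Finset.sum_le_sum fun x hx =>
        mul_le_of_le_one_right (hπ x hx) (sub_le_self 1 (hg_nonneg x hx))

theorem one_div_mean_entrance_time_bounds (hc : IsConductance U c) (hπ : ∀ x ∈ U, 0 ≤ π x)
    (hπ_sum : ∑ x ∈ U, π x = 1) (hD : 0 < ∑ x ∈ U \ A₂, π x)
    (hg : IsEquilibriumPotential U A₁ A₂ c g) (hu : IsMeanEntranceTime U A₁ c π u) :
    dirichletForm U c g g *
        (1 - sSup ((fun x => |1 - u x / ∑ y ∈ U, π y * u y|) '' ((U \ A₂ : Finset α) : Set α)))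
      ≤ 1 / ∑ y ∈ U, π y * u y ∧
    1 / ∑ y ∈ U, π y * u y ≤ dirichletForm U c g g / (∑ x ∈ U \ A₂, π x) ^ 2 := by
  obtain ⟨w, hw, hw_mem, energy⟩ := hg.exists_mem_Icc hc
  rw [← energy]
  have upper := hu.sq_sum_sdiff_le hc hπ hw.toIsTestFunction fun x _ => (hw_mem x).2
  set m := ∑ y ∈ U, π y * u y
  set s := sSup ((fun x => |1 - u x / m|) '' ((U \ A₂ : Finset α) : Set α))
  have hm : 0 < m :=
    pos_of_mul_pos_left ((pow_pos hD 2).trans_le upper) (hc.dirichletForm_self_nonneg w)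
  have u_ge : ∀ x ∈ U \ A₂, m * (1 - s) ≤ u x := fun x hx => by
    have : |1 - u x / m| ≤ s :=
      le_csSup ((Finset.finite_toSet _).image _).bddAbove ⟨x, hx, rfl⟩
    rw [mul_comm, ← le_div_iff₀ hm]
    linarith [le_abs_self (1 - u x / m)]
  have lower := hw.mul_dirichletForm_self_le hc hπ (fun x _ => (hw_mem x).1) hu u_ge
  rw [hπ_sum] at lower
  constructor
  · rw [le_div_iff₀ hm]
    linarith
  · rw [div_le_div_iff₀ hm (pow_pos hD 2)]
    linarith

end IsEquilibriumPotential

end Network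

section TiltedWalk

variable {d : ℕ} {U A₁ A₂ : Finset (Fin d → ℤ)} {f : (Fin d → ℤ) → ℝ}

/-- The conductances of the walk with generator `genOp d U f`, reversible for `f²`. -/
def tiltedConductance (d : ℕ) (f : (Fin d → ℤ) → ℝ) (x y : Fin d → ℤ) : ℝ :=
  if latAdj d x y then f x * f y / (2 * (d : ℝ)) else 0

lemma latAdj_comm (x y : Fin d → ℤ) : latAdj d x y ↔ latAdj d y x := by
  rw [latAdj, latAdj, norm_sub_rev]

lemma isConductance_tiltedConductance (hf : ∀ x ∈ U, 0 ≤ f x) :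
    IsConductance U (tiltedConductance d f) where
  symm x _ y _ := by simp only [tiltedConductance, latAdj_comm x y, mul_comm (f x)]
  nonneg x hx y hy := by
    have := hf x hx
    have := hf y hy
    unfold tiltedConductance
    split_ifs <;> positivity

lemma dirForm_eq_dirichletForm (v : (Fin d → ℤ) → ℝ) :
    dirForm d U f v = dirichletForm U (tiltedConductance d f) v v := by
  simp only [dirForm, dirichletForm_apply, tiltedConductance, Finset.sum_filter, ite_mul, zero_mul,
    pow_two]

lemma dirForm_nonneg (hf : ∀ x ∈ U, 0 ≤ f x) (v : (Fin d → ℤ) → ℝ) : 0 ≤ dirForm d U f v := by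
  rw [dirForm_eq_dirichletForm]
  exact (isConductance_tiltedConductance hf).dirichletForm_self_nonneg v

lemma networkLaplacian_tiltedConductance (v : (Fin d → ℤ) → ℝ) {x : Fin d → ℤ} (hx : f x ≠ 0) :
    networkLaplacian U (tiltedConductance d f) v x = f x ^ 2 * genOp d U f v x := by
  simp only [networkLaplacian, tiltedConductance, genOp, Finset.sum_filter, Finset.mul_sum,
    latAdj_comm x]
  refine Finset.sum_congr rfl fun y _ => ?_
  split_ifs
  · field_simp
  · simp

lemma isEquilibriumPotential_of_genOp_eq_zero (hf : ∀ x ∈ U, 0 < f x) {g : (Fin d → ℤ) → ℝ}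
    (h₁ : ∀ x ∈ A₁, g x = 1) (h₀ : ∀ x ∈ U, x ∉ A₂ → g x = 0)
    (hL : ∀ x ∈ A₂, x ∉ A₁ → genOp d U f g x = 0) :
    IsEquilibriumPotential U A₁ A₂ (tiltedConductance d f) g where
  eq_one := h₁
  eq_zero := h₀
  networkLaplacian_eq_zero x hx hx₂ hx₁ := by
    rw [networkLaplacian_tiltedConductance g (hf x hx).ne', hL x hx₂ hx₁, mul_zero]

lemma isMeanEntranceTime_of_genOp_eq_neg_one (hf : ∀ x ∈ U, 0 < f x) {u : (Fin d → ℤ) → ℝ}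
    (h₀ : ∀ x ∈ A₁, u x = 0) (hL : ∀ x ∈ U, x ∉ A₁ → genOp d U f u x = -1) :
    IsMeanEntranceTime U A₁ (tiltedConductance d f) (fun x => f x ^ 2) u where
  eq_zero := h₀
  networkLaplacian_eq x hx hx₁ := by
    rw [networkLaplacian_tiltedConductance u (hf x hx).ne', hL x hx hx₁, mul_neg_one]

end TiltedWalk

section ConfinedWalk

variable {d N R : ℕ} {h : EuclideanSpace ℝ (Fin d) → ℝ}

lemma mem_UNf_iff {x : Fin d → ℤ} : x ∈ UNf d N R ↔ ‖toR d x‖ < (N : ℝ) * R := by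
  rw [UNf, Finset.mem_filter, and_iff_right_iff_imp, Finset.mem_Icc]
  intro hx
  have abs_le_radius : ∀ i, |x i| ≤ ((N * R : ℕ) : ℤ) := fun i => by
    have : |(x i : ℝ)| ≤ ‖toR d x‖ := by simpa [toR] using PiLp.norm_apply_le (toR d x) i
    exact_mod_cast this.trans hx.le
  exact ⟨fun i => (abs_le.1 (abs_le_radius i)).1, fun i => (abs_le.1 (abs_le_radius i)).2⟩

lemma inv_smul_toR_mem_ball_iff (hN : 0 < N) {x : Fin d → ℤ} :
    (N : ℝ)⁻¹ • toR d x ∈ ball (0 : EuclideanSpace ℝ (Fin d)) R ↔ x ∈ UNf d N R := by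
  have hN' : (0 : ℝ) < N := Nat.cast_pos.2 hN
  rw [mem_ball_zero_iff, mem_UNf_iff, norm_smul, norm_inv, Real.norm_of_nonneg hN'.le,
    inv_mul_lt_iff₀ hN']

lemma hNsq_eq_sum (hN : 0 < N)
    (hzero : ∀ z ∉ ball (0 : EuclideanSpace ℝ (Fin d)) (R : ℝ), h z = 0) :
    hNsq d N h = ∑ x ∈ UNf d N R, hNf d N h x ^ 2 :=
  tsum_eq_sum fun x hx => by
    rw [hNf, hzero _ (mt (inv_smul_toR_mem_ball_iff hN).1 hx), zero_pow two_ne_zero]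

lemma hNf_pos (hN : 0 < N) (hpos : ∀ z ∈ ball (0 : EuclideanSpace ℝ (Fin d)) (R : ℝ), 0 < h z)
    {x : Fin d → ℤ} (hx : x ∈ UNf d N R) : 0 < hNf d N h x :=
  hpos _ ((inv_smul_toR_mem_ball_iff hN).2 hx)

lemma hNsq_pos (hN : 0 < N) (hpos : ∀ z ∈ ball (0 : EuclideanSpace ℝ (Fin d)) (R : ℝ), 0 < h z)
    (hzero : ∀ z ∉ ball (0 : EuclideanSpace ℝ (Fin d)) (R : ℝ), h z = 0)
    (hU : (UNf d N R).Nonempty) : 0 < hNsq d N h := by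
  rw [hNsq_eq_sum hN hzero]
  exact Finset.sum_pos (fun x hx => pow_pos (hNf_pos hN hpos hx) 2) hU

lemma fConf_nonneg (hh : ∀ z, 0 ≤ h z) (x : Fin d → ℤ) : 0 ≤ fConf d N h x :=
  div_nonneg (hh _) (Real.sqrt_nonneg _)

lemma fConf_pos (hN : 0 < N) (hpos : ∀ z ∈ ball (0 : EuclideanSpace ℝ (Fin d)) (R : ℝ), 0 < h z)
    (hzero : ∀ z ∉ ball (0 : EuclideanSpace ℝ (Fin d)) (R : ℝ), h z = 0)
    {x : Fin d → ℤ} (hx : x ∈ UNf d N R) : 0 < fConf d N h x :=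
  div_pos (hNf_pos hN hpos hx) (Real.sqrt_pos.2 (hNsq_pos hN hpos hzero ⟨x, hx⟩))

lemma sum_piConf_eq_one (hN : 0 < N)
    (hpos : ∀ z ∈ ball (0 : EuclideanSpace ℝ (Fin d)) (R : ℝ), 0 < h z)
    (hzero : ∀ z ∉ ball (0 : EuclideanSpace ℝ (Fin d)) (R : ℝ), h z = 0)
    (hU : (UNf d N R).Nonempty) : ∑ x ∈ UNf d N R, piConf d N h x = 1 := by
  have hsq := hNsq_pos hN hpos hzero hU
  simp only [piConf, fConf, div_pow, Real.sq_sqrt hsq.le]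
  rw [← Finset.sum_div, ← hNsq_eq_sum hN hzero, div_self hsq.ne']

lemma wRad_pos (hd : 2 < d) {a r : ℝ} (ha : 0 < a) {z : EuclideanSpace ℝ (Fin d)}
    (hz : z ∈ ball 0 r) : 0 < wRad d a r z := by
  rw [mem_ball_zero_iff] at hz
  have exponent_neg : (2 : ℝ) - d < 0 := sub_neg.2 (by exact_mod_cast hd)
  unfold wRad
  split_ifs with hza
  · exact one_pos
  · rw [not_le] at hza
    exact div_pos (sub_pos.2 (Real.rpow_lt_rpow_of_neg (ha.trans hza) hz exponent_neg))
      (sub_pos.2 (Real.rpow_lt_rpow_of_neg ha (hza.trans hz) exponent_neg))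
  · exact absurd hz.le ‹_›

lemma boxF_ssubset_boxF [Nonempty (Fin d)] (x₀ : Fin d → ℤ) {r s : ℕ} (hrs : r < s) :
    boxF d x₀ r ⊂ boxF d x₀ s := by
  refine Finset.Icc_ssubset_Icc_left (fun i => ?_) (StrongLT.lt fun i => ?_) fun i => ?_ <;>
    beta_reduce <;> omega

end ConfinedWalk

lemma eventually_floor_rpow_lt {a b : ℝ} (ha : 0 ≤ a) (hab : a < b) :
    ∀ᶠ N : ℕ in Filter.atTop, ⌊(N : ℝ) ^ a⌋₊ < ⌊(N : ℝ) ^ b⌋₊ := by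
  have ratio : Filter.Tendsto (fun N : ℕ => (N : ℝ) ^ (b - a)) Filter.atTop Filter.atTop :=
    (tendsto_rpow_atTop (sub_pos.2 hab)).comp tendsto_natCast_atTop_atTop
  filter_upwards [ratio.eventually_ge_atTop 2, Filter.eventually_ge_atTop 1] with N hratio hN
  have hN' : (1 : ℝ) ≤ N := Nat.one_le_cast.2 hN
  have one_le : (1 : ℝ) ≤ (N : ℝ) ^ a := Real.one_le_rpow hN' ha
  have gap : (N : ℝ) ^ a + 1 ≤ (N : ℝ) ^ b := by
    calc (N : ℝ) ^ a + 1 ≤ (N : ℝ) ^ a * 2 := by linarith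
      _ ≤ (N : ℝ) ^ a * (N : ℝ) ^ (b - a) := by gcongr
      _ = (N : ℝ) ^ b := by rw [← Real.rpow_add (by linarith), add_sub_cancel]
  rw [← Nat.add_one_le_iff, ← Nat.floor_add_one (by linarith)]
  exact Nat.floor_le_floor gap

theorem statement8_general {d R : ℕ} (hd : 0 < d) {h : EuclideanSpace ℝ (Fin d) → ℝ}
    (hpos : ∀ z ∈ ball (0 : EuclideanSpace ℝ (Fin d)) (R : ℝ), 0 < h z)
    (hzero : ∀ z ∉ ball (0 : EuclideanSpace ℝ (Fin d)) (R : ℝ), h z = 0)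
    {r s : ℝ} (hr : 0 ≤ r) (hrs : r < s) :
    ∃ N₀ : ℕ, ∀ N, N₀ ≤ N → ∀ x₀, Abx d x₀ N s ⊆ UNf d N R →
      ∀ (A : Finset (Fin d → ℤ)) (g : (Fin d → ℤ) → ℝ),
        (∀ x ∈ A, g x = 1) →
        (∀ x ∈ UNf d N R, x ∉ Abx d x₀ N r → g x = 0) →
        (∀ x ∈ Abx d x₀ N r, x ∉ A → genOp d (UNf d N R) (fConf d N h) g x = 0) →
      ∀ u : (Fin d → ℤ) → ℝ,
        (∀ x ∈ A, u x = 0) →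
        (∀ x ∈ UNf d N R, x ∉ A → genOp d (UNf d N R) (fConf d N h) u x = -1) →
        dirForm d (UNf d N R) (fConf d N h) g *
            (1 - sSup ((fun x => |1 - u x / ∑ y ∈ UNf d N R, piConf d N h y * u y|) ''
              ((UNf d N R \ Abx d x₀ N r : Finset (Fin d → ℤ)) : Set (Fin d → ℤ))))
          ≤ 1 / ∑ y ∈ UNf d N R, piConf d N h y * u y ∧
        1 / ∑ y ∈ UNf d N R, piConf d N h y * u y
          ≤ dirForm d (UNf d N R) (fConf d N h) g /
            (∑ x ∈ UNf d N R \ Abx d x₀ N r, piConf d N h x) ^ 2 := by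
  obtain ⟨N₀, hN₀⟩ := Filter.eventually_atTop.1
    ((eventually_floor_rpow_lt hr hrs).and (Filter.eventually_gt_atTop 0))
  refine ⟨N₀, fun N hN x₀ hU A g hg₁ hg₀ hLg u hu hLu => ?_⟩
  obtain ⟨hfloor, hNpos⟩ := hN₀ N hN
  have hf : ∀ x ∈ UNf d N R, 0 < fConf d N h x := fun _ => fConf_pos hNpos hpos hzero
  have hπ : ∀ x ∈ UNf d N R, 0 < piConf d N h x := fun x hx => pow_pos (hf x hx) 2
  have : Nonempty (Fin d) := ⟨⟨0, hd⟩⟩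
  obtain ⟨x, hx, hx₂⟩ := Finset.exists_of_ssubset (boxF_ssubset_boxF x₀ hfloor)
  have hD : 0 < ∑ x ∈ UNf d N R \ Abx d x₀ N r, piConf d N h x :=
    Finset.sum_pos (fun y hy => hπ y (Finset.mem_sdiff.1 hy).1)
      ⟨x, Finset.mem_sdiff.2 ⟨hU hx, hx₂⟩⟩
  rw [dirForm_eq_dirichletForm]
  exact (isEquilibriumPotential_of_genOp_eq_zero hf hg₁ hg₀ hLg).one_div_mean_entrance_time_bounds
    (isConductance_tiltedConductance fun x hx => (hf x hx).le) (fun x hx => (hπ x hx).le)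
    (sum_piConf_eq_one hNpos hpos hzero ⟨x, hU hx⟩) hD
    (isMeanEntranceTime_of_genOp_eq_neg_one hf hu hLu)

theorem statement8 (d : ℕ) (hd : 3 ≤ d) (δ : ℝ) (hδ : δ ∈ Set.Ioo (0:ℝ) 1)
    (R : ℕ) (hR : 400 < R)
    (K : Set (EuclideanSpace ℝ (Fin d))) (hK : IsCompact K)
    (h0K : (0 : EuclideanSpace ℝ (Fin d)) ∈ K)
    (hKR : K ⊆ closedBall 0 ((R:ℝ)/100))
    (h : EuclideanSpace ℝ (Fin d) → ℝ) (hcont : Continuous h)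
    (hrange : ∀ z, h z ∈ Set.Icc (0:ℝ) 1)
    (hone : ∀ z ∈ cthickening (2*δ) K, h z = 1)
    (hzero : ∀ z ∉ ball (0 : EuclideanSpace ℝ (Fin d)) (R:ℝ), h z = 0)
    (hsmooth : ContDiffOn ℝ (⊤ : ℕ∞) h (closedBall (0 : EuclideanSpace ℝ (Fin d)) (R:ℝ)))
    (hharm : ∀ z ∈ ball (0 : EuclideanSpace ℝ (Fin d)) (R:ℝ) \ closedBall (0 : EuclideanSpace ℝ (Fin d)) ((R:ℝ)/2),
      lap d h z = 0)
    (c₁ c₂ c₃ : ℝ) (hc₁ : 0 < c₁) (hc₂ : 0 < c₂) (hc₃ : 0 < c₃)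
    (hw1 : ∀ z, c₁ * wRad d δ R z ≤ h z)
    (hw2 : ∀ z, h z ≤ c₂ * wRad d ((R:ℝ)/50) R z)
    (hmono : ∀ z₁ z₂ : EuclideanSpace ℝ (Fin d), ‖z₁‖ ≤ ‖z₂‖ → ‖z₂‖ ≤ (R:ℝ) → c₃ * h z₂ ≤ h z₁)
    (r₁ r₂ r₃ r₄ r₅ : ℝ)
    (hr : 0 < r₁ ∧ r₁ < r₂ ∧ r₂ < r₃ ∧ r₃ < r₄ ∧ r₄ < r₅ ∧ r₅ < 1) :
    ∃ N₀ : ℕ, ∀ N, N₀ ≤ N → ∀ x₀ ∈ GammaN d N δ K,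
      Abx d x₀ N r₅ ⊆ A6b d x₀ N δ → A6b d x₀ N δ ⊆ UNf d N R →
      (∀ x ∈ A6b d x₀ N δ, hNf d N h x = 1) →
      ∀ g : (Fin d → ℤ) → ℝ,
        (∀ x ∈ Abx d x₀ N r₁, g x = 1) →
        (∀ x ∈ UNf d N R, x ∉ Abx d x₀ N r₂ → g x = 0) →
        (∀ x ∈ Abx d x₀ N r₂, x ∉ Abx d x₀ N r₁ → genOp d (UNf d N R) (fConf d N h) g x = 0) →
      ∀ uA : (Fin d → ℤ) → ℝ,
        (∀ x ∈ Abx d x₀ N r₁, uA x = 0) →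
        (∀ x ∈ UNf d N R, x ∉ Abx d x₀ N r₁ → genOp d (UNf d N R) (fConf d N h) uA x = -1) →
        dirForm d (UNf d N R) (fConf d N h) g *
            (1 - 2 * sSup ((fun x => |1 - uA x / (∑ y ∈ UNf d N R, piConf d N h y * uA y)|) ''
              ((UNf d N R \ Abx d x₀ N r₂ : Finset (Fin d → ℤ)) : Set (Fin d → ℤ))))
          ≤ 1 / (∑ y ∈ UNf d N R, piConf d N h y * uA y) ∧
        1 / (∑ y ∈ UNf d N R, piConf d N h y * uA y)
          ≤ dirForm d (UNf d N R) (fConf d N h) g / (∑ x ∈ UNf d N R \ Abx d x₀ N r₂, piConf d N h x)^2 := by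
  obtain ⟨hr₁, hr₁₂, hr₂₃, hr₃₄, hr₄₅, -⟩ := hr
  have hpos : ∀ z ∈ ball (0 : EuclideanSpace ℝ (Fin d)) (R : ℝ), 0 < h z := fun z hz =>
    (mul_pos hc₁ (wRad_pos hd hδ.1 hz)).trans_le (hw1 z)
  obtain ⟨N₀, bounds⟩ := statement8_general (by omega) hpos hzero (hr₁.trans hr₁₂).le
    (hr₂₃.trans (hr₃₄.trans hr₄₅))
  refine ⟨N₀, fun N hN x₀ _ h56 h6U _ g hg₁ hg₀ hLg u hu hLu => ?_⟩
  obtain ⟨lower, upper⟩ := bounds N hN x₀ (h56.trans h6U) _ g hg₁ hg₀ hLg u hu hLu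
  have energy_nonneg := dirForm_nonneg (U := UNf d N R)
    (fun x _ => fConf_nonneg (N := N) (fun z => (hrange z).1) x) g
  refine ⟨(mul_le_mul_of_nonneg_left (sub_le_sub_left
    (le_mul_of_one_le_left (Real.sSup_nonneg ?_) one_le_two) 1) energy_nonneg).trans lower, upper⟩
  exact Set.forall_mem_image.2 fun _ _ => abs_nonneg _
end
end
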